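/- arXiv:2509.11710 — 2 statements merged into one kernel-verified Lean document; each statement's English description precedes it below -/
import Mathlib

section
/- Let d ≥ 5. For every sufficiently small ε > 0 there exists a compact subset F of the standard paraboloid P_d = {(x̄, |x̄|²) : x̄ ∈ ℝ^{d−1}} ⊆ ℝ^d such that the Hausdorff dimension of F is at least (d−3)/2 − ε and the dot product set Π(F) has one-dimensional Lebesgue measure zero. -/
/-!
The dot product of the points of the paraboloid above `u` and `v` is `u · v + |u|² |v|²`. If
`u = a / q` and `v = b / q` with integer vectors `a`, `b` satisfying `|a|² ≡ |b|² ≡ 0 (mod q)`, this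
number lies in `q⁻² ℤ`. For `q` prime, `m := d - 3` of the `d - 1 = m + 2` coordinates of `a` can be
prescribed freely, since every residue is a sum of two squares mod `q`. This gives `q ^ m` points
whose dot products take only about `q²` values, so cubes around them of side slightly below `q⁻²`
still have a dot product set of small measure: this is the dimension `m / 2`.

To iterate, place inside a cube of side `1 / M` the corners of the next cubes at the old corner plus
`a / (M p)`, where `p` is prime and `p ∣ |a|²`. As the old corner has denominator `M`, the new ones
have numerators over `M p` congruent to `a` mod `p`, and the dot products of the points above them
lie in `(M ^ 4 p ^ 2)⁻¹ ℤ`. New cubes of side `o((M ^ 4 p ^ 2)⁻¹)` give a null dot product set. The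
free digits of a point are the mixed radix digits of a parameter `t` in a cube of `ℝ ^ m`, and the
map back to `t` is Hölder; when the primes `p` grow so fast that fixed powers of `M` are negligible,
every exponent below `1 / 2` is allowed.
-/

open MeasureTheory
open scoped RealInnerProductSpace ENNReal

/-- The standard paraboloid `P_d = {(x̄, |x̄|²) : x̄ ∈ ℝ^{d-1}}` in `ℝ^d`. -/
def stdParaboloid (d : ℕ) : Set (EuclideanSpace ℝ (Fin d)) :=
  {p | ∃ x : EuclideanSpace ℝ (Fin (d - 1)),
    p = fun i : Fin d => if h : (i : ℕ) < d - 1 then x ⟨i, h⟩ else ‖x‖ ^ 2}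

/-- The dot product set `Π(E) = {x · y : x, y ∈ E}`. -/
def dotSet {d : ℕ} (E : Set (EuclideanSpace ℝ (Fin d))) : Set ℝ :=
  {t | ∃ x ∈ E, ∃ y ∈ E, ⟪x, y⟫ = t}

/-! ### Dimension, measure and distance -/

theorem dimH_le_dimH_image_div {X Y : Type*} [EMetricSpace X] [EMetricSpace Y] {C α : NNReal}
    (hα : 0 < α) {f : X → Y} {s : Set X}
    (hf : ∀ a ∈ s, ∀ b ∈ s, edist a b ≤ C * edist (f a) (f b) ^ (α : ℝ)) :
    dimH s ≤ dimH (f '' s) / α := by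
  rcases s.eq_empty_or_nonempty with rfl | ⟨a₀, -⟩
  · simp
  have : Nonempty X := ⟨a₀⟩
  set g := Function.invFunOn f s
  have hg_mem : ∀ y ∈ f '' s, g y ∈ s := fun y hy => Function.invFunOn_mem hy
  have hg_eq : ∀ y ∈ f '' s, f (g y) = y := fun y hy => Function.invFunOn_eq hy
  have hg : HolderOnWith C α g (f '' s) := fun y hy z hz => by
    simpa only [hg_eq y hy, hg_eq z hz] using hf _ (hg_mem y hy) _ (hg_mem z hz)
  have hgf : ∀ a ∈ s, g (f a) = a := fun a ha => by
    have hfa := Set.mem_image_of_mem f ha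
    have h := hf _ (hg_mem _ hfa) a ha
    rw [hg_eq _ hfa, edist_self, ENNReal.zero_rpow_of_pos (by exact_mod_cast hα), mul_zero] at h
    exact edist_le_zero.mp h
  calc dimH s ≤ dimH (g '' (f '' s)) :=
        dimH_mono fun a ha => ⟨f a, Set.mem_image_of_mem f ha, hgf a ha⟩
    _ ≤ dimH (f '' s) / α := hg.dimH_image_le hα

theorem dimH_univ_pi_Ico {ι : Type*} [Fintype ι] {a b : ι → ℝ} (hab : ∀ i, a i < b i) :
    dimH (Set.univ.pi fun i => Set.Ico (a i) (b i)) = Fintype.card ι := by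
  have hint : (interior (Set.univ.pi fun i => Set.Ico (a i) (b i))).Nonempty := by
    rw [interior_pi_set Set.finite_univ]
    exact Set.univ_pi_nonempty_iff.mpr fun i => by simpa using hab i
  rw [Real.dimH_of_nonempty_interior hint, Module.finrank_fintype_fun_eq_card]

theorem volume_le_of_near_grid {E : Set ℝ} {L B : ℕ} {R : ℝ}
    (hE : ∀ r ∈ E, ∃ z : ℕ, z ≤ B * L ∧ |r - z / L| ≤ R) :
    volume E ≤ ENNReal.ofReal ((B * L + 1) * (2 * R)) := by
  have hcover : E ⊆ ⋃ z ∈ Finset.range (B * L + 1), Metric.closedBall ((z : ℝ) / L) R := by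
    intro r hr
    obtain ⟨z, hz, hrz⟩ := hE r hr
    exact Set.mem_biUnion (Finset.mem_range_succ_iff.mpr hz) (by simpa [Real.dist_eq] using hrz)
  calc volume E ≤ ∑ z ∈ Finset.range (B * L + 1), volume (Metric.closedBall ((z : ℝ) / L) R) :=
        (measure_mono hcover).trans (measure_biUnion_finset_le _ _)
    _ = ENNReal.ofReal ((B * L + 1) * (2 * R)) := by
        simp only [Real.volume_closedBall, Finset.sum_const, Finset.card_range, nsmul_eq_mul]
        rw [← ENNReal.ofReal_natCast, ← ENNReal.ofReal_mul (by positivity)]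
        push_cast
        rfl

theorem dist_le_sqrt_card_mul {ι : Type*} [Fintype ι] {x y : EuclideanSpace ℝ ι} {r : ℝ}
    (hr : 0 ≤ r) (h : ∀ i, |x i - y i| ≤ r) : dist x y ≤ √(Fintype.card ι) * r := by
  calc dist x y = √(∑ i, |x i - y i| ^ 2) := by simp only [EuclideanSpace.dist_eq, Real.dist_eq]
    _ ≤ √(∑ _i : ι, r ^ 2) := by gcongr with i; exact h i
    _ = √(Fintype.card ι) * r := by
        rw [Finset.sum_const, Finset.card_univ, nsmul_eq_mul, Real.sqrt_mul (Nat.cast_nonneg _),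
          Real.sqrt_sq hr]

theorem norm_le_sqrt_card_of_mem_Icc {ι : Type*} [Fintype ι] {u : EuclideanSpace ℝ ι}
    (hu : ∀ j, u j ∈ Set.Icc 0 1) : ‖u‖ ≤ √(Fintype.card ι) := by
  have h := dist_le_sqrt_card_mul (x := u) (y := 0) zero_le_one fun j => by
    simpa [abs_of_nonneg (hu j).1] using (hu j).2
  simpa using h

theorem tsum_mem_Icc_of_add_le {d r : ℕ → ℝ} (hd : ∀ k, 0 ≤ d k) (hr : ∀ k, 0 ≤ r k)
    (h : ∀ k, d k + r (k + 1) ≤ r k) (k : ℕ) :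
    ∑' i, d i ∈ Set.Icc (∑ i ∈ Finset.range k, d i) (∑ i ∈ Finset.range k, d i + r k) := by
  have hanti : Antitone fun n => ∑ i ∈ Finset.range n, d i + r n :=
    antitone_nat_of_succ_le fun n => by
      rw [Finset.sum_range_succ]
      linarith [h n]
  have hmono : Monotone fun n => ∑ i ∈ Finset.range n, d i :=
    monotone_nat_of_le_succ fun n => by
      rw [Finset.sum_range_succ]
      linarith [hd n]
  have hle : ∀ n, ∑ i ∈ Finset.range n, d i ≤ ∑ i ∈ Finset.range k, d i + r k := fun n =>
    calc ∑ i ∈ Finset.range n, d i ≤ ∑ i ∈ Finset.range (max n k), d i := hmono (le_max_left n k)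
      _ ≤ ∑ i ∈ Finset.range (max n k), d i + r (max n k) := le_add_of_nonneg_right (hr _)
      _ ≤ ∑ i ∈ Finset.range k, d i + r k := hanti (le_max_right n k)
  exact ⟨(summable_of_sum_range_le hd hle).sum_le_tsum _ fun i _ => hd i,
    Real.tsum_le_of_sum_range_le hd hle⟩

theorem one_le_abs_natCast_sub {a b : ℕ} (h : a ≠ b) : 1 ≤ |(a : ℝ) - b| := by
  exact_mod_cast Int.one_le_abs (sub_ne_zero.mpr (Nat.cast_injective.ne h))

theorem abs_sub_le_abs_natFloor_sub_add_one {x y : ℝ} (hx : 0 ≤ x) (hy : 0 ≤ y) :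
    |x - y| ≤ |(⌊x⌋₊ : ℝ) - ⌊y⌋₊| + 1 := by
  have hfract : |(x - ⌊x⌋₊) - (y - ⌊y⌋₊)| ≤ 1 :=
    abs_sub_le_of_nonneg_of_le (sub_nonneg.mpr (Nat.floor_le hx))
      (by linarith [Nat.lt_floor_add_one x]) (sub_nonneg.mpr (Nat.floor_le hy))
      (by linarith [Nat.lt_floor_add_one y])
  calc |x - y| = |((⌊x⌋₊ : ℝ) - ⌊y⌋₊) + ((x - ⌊x⌋₊) - (y - ⌊y⌋₊))| := by ring_nf
    _ ≤ |(⌊x⌋₊ : ℝ) - ⌊y⌋₊| + 1 := (abs_add_le _ _).trans (by gcongr)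

theorem two_mul_div_le_mul_rpow {α ρ C M P D : ℝ} (hα : 0 ≤ α) (hα' : α ≤ 1) (hρ : 0 ≤ ρ)
    (hρ' : ρ ≤ 1) (hM : 0 < M) (hP : 0 < P) (hMP : M ^ α ≤ C * P)
    (hD : ρ / (2 * M) ≤ D) : 2 * ρ / P ≤ 4 * C * D ^ α := by
  have hD0 : 0 ≤ D := (by positivity : 0 ≤ ρ / (2 * M)).trans hD
  have hρD : ρ ≤ 2 * (M * D) := by
    rw [div_le_iff₀ (by positivity)] at hD
    linarith
  have htwo : (2 : ℝ) ^ α ≤ 2 := by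
    simpa using Real.rpow_le_rpow_of_exponent_le one_le_two hα'
  have hρα : ρ ≤ 2 * (C * P * D ^ α) :=
    calc ρ ≤ ρ ^ α := Real.self_le_rpow_of_le_one hρ hρ' hα'
      _ ≤ (2 * (M * D)) ^ α := by gcongr
      _ = 2 ^ α * (M ^ α * D ^ α) := by
          rw [Real.mul_rpow two_pos.le (by positivity), Real.mul_rpow hM.le hD0]
      _ ≤ 2 * (C * P * D ^ α) := by gcongr
  rw [div_le_iff₀ hP]
  linarith

/-! ### Mixed radix expansions -/

/-- The integer formed by the first `k` digits of `x ∈ [0, 1)` in the mixed radix system with bases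
`b 0, b 1, …`, that is, the numerator of the truncation of `x` to the denominator
`b 0 * ⋯ * b (k - 1)`. -/
noncomputable def radixPrefix (b : ℕ → ℕ) (k : ℕ) (x : ℝ) : ℕ :=
  ⌊((∏ i ∈ Finset.range k, b i : ℕ) : ℝ) * x⌋₊

/-- The digit number `k`, counted from `0`, of `x ∈ [0, 1)` in the mixed radix system with bases
`b 0, b 1, …`. -/
noncomputable def radixDigit (b : ℕ → ℕ) (k : ℕ) (x : ℝ) : ℕ := radixPrefix b (k + 1) x % b k

section MixedRadix

variable {b : ℕ → ℕ} {x y : ℝ} {k : ℕ}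

theorem radixDigit_lt (hb : 0 < b k) (x : ℝ) : radixDigit b k x < b k := Nat.mod_lt _ hb

theorem radixPrefix_zero (hx : x ∈ Set.Ico 0 1) : radixPrefix b 0 x = 0 := by
  simpa [radixPrefix] using hx.2

theorem radixPrefix_succ (hb : 0 < b k) (x : ℝ) :
    radixPrefix b (k + 1) x = b k * radixPrefix b k x + radixDigit b k x := by
  have hdiv : radixPrefix b (k + 1) x / b k = radixPrefix b k x := by
    have hb' : (b k : ℝ) ≠ 0 := by exact_mod_cast hb.ne'
    rw [radixPrefix, radixPrefix, ← Nat.floor_div_natCast, Finset.prod_range_succ]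
    push_cast
    field_simp
  rw [← hdiv, radixDigit, Nat.div_add_mod]

theorem radixPrefix_congr (hb : ∀ k, 0 < b k) (hx : x ∈ Set.Ico 0 1) (hy : y ∈ Set.Ico 0 1)
    (h : ∀ l < k, radixDigit b l x = radixDigit b l y) :
    radixPrefix b k x = radixPrefix b k y := by
  induction k with
  | zero => rw [radixPrefix_zero hx, radixPrefix_zero hy]
  | succ k ih =>
    rw [radixPrefix_succ (hb k), radixPrefix_succ (hb k), h k k.lt_succ_self,
      ih fun l hl => h l (hl.trans k.lt_succ_self)]

theorem abs_sub_le_of_radixDigit_eq (hb : ∀ k, 0 < b k) (hx : x ∈ Set.Ico 0 1)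
    (hy : y ∈ Set.Ico 0 1) (h : ∀ l < k, radixDigit b l x = radixDigit b l y) :
    |x - y| ≤ (|(radixDigit b k x : ℝ) - radixDigit b k y| + 1) /
      (∏ i ∈ Finset.range (k + 1), b i : ℕ) := by
  set P : ℝ := ((∏ i ∈ Finset.range (k + 1), b i : ℕ) : ℝ) with hP
  have hP0 : 0 < P := by
    rw [hP]
    exact_mod_cast Finset.prod_pos fun i _ => hb i
  have hprefix : (radixPrefix b (k + 1) x : ℝ) - radixPrefix b (k + 1) y =
      radixDigit b k x - radixDigit b k y := by
    rw [radixPrefix_succ (hb k), radixPrefix_succ (hb k), radixPrefix_congr hb hx hy h]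
    push_cast
    ring
  rw [le_div_iff₀' hP0]
  calc P * |x - y| = |P * x - P * y| := by rw [← mul_sub, abs_mul, abs_of_pos hP0]
    _ ≤ |(radixPrefix b (k + 1) x : ℝ) - radixPrefix b (k + 1) y| + 1 :=
        abs_sub_le_abs_natFloor_sub_add_one (mul_nonneg hP0.le hx.1) (mul_nonneg hP0.le hy.1)
    _ = |(radixDigit b k x : ℝ) - radixDigit b k y| + 1 := by rw [hprefix]

theorem eq_of_forall_radixDigit_eq (hb : ∀ k, 2 ≤ b k) (hx : x ∈ Set.Ico 0 1)
    (hy : y ∈ Set.Ico 0 1) (h : ∀ k, radixDigit b k x = radixDigit b k y) : x = y := by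
  have hle : ∀ k : ℕ, |x - y| ≤ (1 / 2 : ℝ) ^ (k + 1) := fun k => by
    have hpow : 2 ^ (k + 1) ≤ ∏ i ∈ Finset.range (k + 1), b i := by
      simpa using Finset.pow_card_le_prod (Finset.range (k + 1)) b 2 fun i _ => hb i
    have hdist := abs_sub_le_of_radixDigit_eq (k := k) (fun k => two_pos.trans_le (hb k)) hx hy
      fun l _ => h l
    rw [h k, sub_self, abs_zero, zero_add] at hdist
    rw [one_div_pow]
    refine hdist.trans ?_
    gcongr
    exact_mod_cast hpow
  have hlim : Filter.Tendsto (fun k : ℕ => (1 / 2 : ℝ) ^ (k + 1)) Filter.atTop (nhds 0) :=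
    (tendsto_pow_atTop_nhds_zero_of_lt_one (by norm_num) (by norm_num)).comp
      (Filter.tendsto_add_atTop_nat 1)
  exact sub_eq_zero.mp (abs_nonpos_iff.mp (ge_of_tendsto' hlim hle))

theorem exists_first_radixDigit_ne {ι : Type*} (hb : ∀ k, 2 ≤ b k) {t s : ι → ℝ}
    (ht : ∀ i, t i ∈ Set.Ico 0 1) (hs : ∀ i, s i ∈ Set.Ico 0 1) (hts : t ≠ s) :
    ∃ k, (∀ l < k, ∀ i, radixDigit b l (t i) = radixDigit b l (s i)) ∧
      ∃ i, radixDigit b k (t i) ≠ radixDigit b k (s i) := by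
  classical
  have hne : ∃ k i, radixDigit b k (t i) ≠ radixDigit b k (s i) := by
    obtain ⟨i, hi⟩ := Function.ne_iff.mp hts
    contrapose! hi
    exact eq_of_forall_radixDigit_eq hb (ht i) (hs i) fun k => hi k i
  exact ⟨Nat.find hne, fun l hl i => by simpa using not_exists.mp (Nat.find_min hne hl) i,
    Nat.find_spec hne⟩

end MixedRadix

/-! ### Dot products on the paraboloid -/

theorem abs_inner_sub_inner_le {E : Type*} [NormedAddCommGroup E] [InnerProductSpace ℝ E]
    {u v u' v' : E} {R δ : ℝ} (hu : ‖u‖ ≤ R) (hv' : ‖v'‖ ≤ R) (huu' : dist u u' ≤ δ)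
    (hvv' : dist v v' ≤ δ) : |⟪u, v⟫ - ⟪u', v'⟫| ≤ 2 * R * δ := by
  have hR : 0 ≤ R := (norm_nonneg u).trans hu
  have hδ : 0 ≤ δ := dist_nonneg.trans huu'
  rw [dist_eq_norm] at huu' hvv'
  calc |⟪u, v⟫ - ⟪u', v'⟫| = |⟪u, v - v'⟫ + ⟪u - u', v'⟫| := by
        rw [inner_sub_right, inner_sub_left]
        ring_nf
    _ ≤ ‖u‖ * ‖v - v'‖ + ‖u - u'‖ * ‖v'‖ :=
        (abs_add_le _ _).trans
          (add_le_add (abs_real_inner_le_norm _ _) (abs_real_inner_le_norm _ _))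
    _ ≤ R * δ + δ * R := by gcongr
    _ = 2 * R * δ := by ring

/-- The dot product of the points `(u, |u|²)` and `(v, |v|²)` of the paraboloid. -/
def paraboloidDot {E : Type*} [NormedAddCommGroup E] [InnerProductSpace ℝ E] (u v : E) : ℝ :=
  ⟪u, v⟫ + ‖u‖ ^ 2 * ‖v‖ ^ 2

section ParaboloidDot

variable {E : Type*} [NormedAddCommGroup E] [InnerProductSpace ℝ E] {u v u' v' : E} {R δ : ℝ}

theorem paraboloidDot_le (hu : ‖u‖ ≤ R) (hv : ‖v‖ ≤ R) : paraboloidDot u v ≤ R ^ 2 + R ^ 4 := by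
  have hR : 0 ≤ R := (norm_nonneg u).trans hu
  calc paraboloidDot u v ≤ ‖u‖ * ‖v‖ + ‖u‖ ^ 2 * ‖v‖ ^ 2 := by
        unfold paraboloidDot
        gcongr
        exact real_inner_le_norm u v
    _ ≤ R * R + R ^ 2 * R ^ 2 := by gcongr
    _ = R ^ 2 + R ^ 4 := by ring

theorem abs_paraboloidDot_sub_le (hu : ‖u‖ ≤ R) (hv : ‖v‖ ≤ R) (hu' : ‖u'‖ ≤ R) (hv' : ‖v'‖ ≤ R)
    (huu' : dist u u' ≤ δ) (hvv' : dist v v' ≤ δ) :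
    |paraboloidDot u v - paraboloidDot u' v'| ≤ (2 * R + 4 * R ^ 3) * δ := by
  have hR : 0 ≤ R := (norm_nonneg u).trans hu
  have hδ : 0 ≤ δ := dist_nonneg.trans huu'
  have hnorm_u : |‖u‖ ^ 2 - ‖u'‖ ^ 2| ≤ 2 * R * δ := by
    simpa only [real_inner_self_eq_norm_sq] using abs_inner_sub_inner_le hu hu' huu' huu'
  have hnorm_v : |‖v‖ ^ 2 - ‖v'‖ ^ 2| ≤ 2 * R * δ := by
    simpa only [real_inner_self_eq_norm_sq] using abs_inner_sub_inner_le hv hv' hvv' hvv'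
  calc |paraboloidDot u v - paraboloidDot u' v'|
      = |(⟪u, v⟫ - ⟪u', v'⟫) + ‖u‖ ^ 2 * (‖v‖ ^ 2 - ‖v'‖ ^ 2) +
          (‖u‖ ^ 2 - ‖u'‖ ^ 2) * ‖v'‖ ^ 2| := by
        unfold paraboloidDot
        ring_nf
    _ ≤ |⟪u, v⟫ - ⟪u', v'⟫| + ‖u‖ ^ 2 * |‖v‖ ^ 2 - ‖v'‖ ^ 2| +
          |‖u‖ ^ 2 - ‖u'‖ ^ 2| * ‖v'‖ ^ 2 := by
        refine (abs_add_three _ _ _).trans_eq ?_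
        simp only [abs_mul, abs_pow, abs_norm]
    _ ≤ 2 * R * δ + R ^ 2 * (2 * R * δ) + (2 * R * δ) * R ^ 2 := by
        gcongr
        exact abs_inner_sub_inner_le hu hv' huu' hvv'
    _ = (2 * R + 4 * R ^ 3) * δ := by ring

end ParaboloidDot

section RationalPoints

variable {ι : Type*} [Fintype ι] {M p : ℕ} {a b : ι → ℕ} {u v : EuclideanSpace ℝ ι}

-- Divisibility of `|a|²` by `p` removes one of the two factors `p` from the denominator.
theorem exists_norm_sq_eq_div (hp : 0 < p) (ha : p ∣ ∑ i, a i ^ 2)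
    (hu : ∀ i, u i = a i / (M * p)) : ∃ w : ℕ, ‖u‖ ^ 2 = w / (M ^ 2 * p) := by
  obtain ⟨w, hw⟩ := ha
  have hw' : ∑ i, (a i : ℝ) ^ 2 = p * w := by exact_mod_cast hw
  have hp' : (p : ℝ) ≠ 0 := by exact_mod_cast hp.ne'
  refine ⟨w, ?_⟩
  simp only [EuclideanSpace.real_norm_sq_eq, hu, div_pow, ← Finset.sum_div]
  rw [hw']
  field_simp

theorem exists_paraboloidDot_eq_div (hM : 0 < M) (hp : 0 < p) (ha : p ∣ ∑ i, a i ^ 2)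
    (hb : p ∣ ∑ i, b i ^ 2) (hu : ∀ i, u i = a i / (M * p)) (hv : ∀ i, v i = b i / (M * p)) :
    ∃ z : ℕ, paraboloidDot u v = z / (M ^ 4 * p ^ 2 : ℕ) := by
  obtain ⟨w, hw⟩ := exists_norm_sq_eq_div hp ha hu
  obtain ⟨w', hw'⟩ := exists_norm_sq_eq_div hp hb hv
  have hinner : ⟪u, v⟫ = (∑ i, a i * b i : ℕ) / (M * p) ^ 2 := by
    simp only [PiLp.inner_apply, hu, hv, Real.inner_apply, div_mul_div_comm, ← Finset.sum_div]
    push_cast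
    ring_nf
  have hM' : (M : ℝ) ≠ 0 := by exact_mod_cast hM.ne'
  have hp' : (p : ℝ) ≠ 0 := by exact_mod_cast hp.ne'
  refine ⟨M ^ 2 * (∑ i, a i * b i) + w * w', ?_⟩
  rw [paraboloidDot, hinner, hw, hw', Nat.cast_add, Nat.cast_mul]
  push_cast
  field_simp

end RationalPoints

theorem exists_append_dvd_sum_sq {m p : ℕ} (hp : p.Prime) (a : Fin m → ℕ) :
    ∃ b : Fin 2 → ℕ, (∀ i, b i < p) ∧ p ∣ ∑ j, Fin.append a b j ^ 2 := by
  have : Fact p.Prime := ⟨hp⟩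
  obtain ⟨x, y, hx, hy, hxy⟩ := Nat.sq_add_sq_modEq p ((p - 1) * ∑ i, a i ^ 2)
  have hhalf : p / 2 < p := Nat.div_lt_self hp.pos one_lt_two
  refine ⟨![x, y], Fin.forall_fin_two.mpr ⟨hx.trans_lt hhalf, hy.trans_lt hhalf⟩, ?_⟩
  have hsum : ∑ j, Fin.append a ![x, y] j ^ 2 = ∑ i, a i ^ 2 + (x ^ 2 + y ^ 2) := by
    simp [Fin.sum_univ_add]
  have hmul : ∑ i, a i ^ 2 + (p - 1) * ∑ i, a i ^ 2 = p * ∑ i, a i ^ 2 := by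
    rw [← one_add_mul, Nat.add_sub_cancel' hp.one_le]
  rw [hsum, (hxy.add_left _).dvd_iff dvd_rfl, hmul]
  exact dvd_mul_right _ _

/-! ### The Cantor set -/

/-- The reciprocal of the side of the cubes of level `k` of the Cantor construction. With
`M = invSide k` and `p = digitBase k`, the dot products of the points above corners of level `k + 1`
have denominator `M ^ 4 * p ^ 2`; the factor `k + 2` makes the cubes small compared to the spacing
of these values. The prime `p` is written out, as `digitBase` is defined from `invSide`. -/
noncomputable def invSide : ℕ → ℕ
  | 0 => 1
  | k + 1 => (k + 2) * invSide k ^ 4 * Nat.nth Nat.Prime (((k + 2) * invSide k ^ 4) ^ k) ^ 2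

/-- The number of values of each free digit in step `k` of the Cantor construction: a prime so large
that, for `0 < k`, `invSide (k + 1)` is at most its power with exponent `2 + 1 / k`. -/
noncomputable def digitBase (k : ℕ) : ℕ := Nat.nth Nat.Prime (((k + 2) * invSide k ^ 4) ^ k)

theorem invSide_succ (k : ℕ) :
    invSide (k + 1) = (k + 2) * (invSide k ^ 4 * digitBase k ^ 2) := by
  rw [← mul_assoc]
  rfl

theorem prime_digitBase (k : ℕ) : (digitBase k).Prime := Nat.prime_nth_prime _

theorem digitBase_pos (k : ℕ) : 0 < digitBase k := (prime_digitBase k).pos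

theorem pow_le_digitBase (k : ℕ) : ((k + 2) * invSide k ^ 4) ^ k ≤ digitBase k :=
  (Nat.le_add_right _ 2).trans (Nat.add_two_le_nth_prime _)

theorem invSide_pos (k : ℕ) : 0 < invSide k := by
  induction k with
  | zero => exact one_pos
  | succ k ih =>
    have := digitBase_pos k
    rw [invSide_succ]
    positivity

theorem two_mul_invSide_mul_digitBase_le (k : ℕ) :
    2 * (invSide k * digitBase k) ≤ invSide (k + 1) := by
  rw [invSide_succ]
  gcongr
  · omega
  · exact Nat.le_self_pow (by norm_num) _
  · exact Nat.le_self_pow (by norm_num) _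

theorem monotone_invSide : Monotone invSide :=
  monotone_nat_of_le_succ fun k => by
    nlinarith [two_mul_invSide_mul_digitBase_le k, invSide_pos k, digitBase_pos k]

theorem invSide_pow_le (J k : ℕ) :
    invSide k ^ J ≤ (invSide J * ∏ i ∈ Finset.range k, digitBase i) ^ (2 * J + 1) := by
  have hprod : ∀ n, 0 < ∏ i ∈ Finset.range n, digitBase i := fun n =>
    Finset.prod_pos fun i _ => digitBase_pos i
  rcases le_or_gt k J with hkJ | hJk
  · calc invSide k ^ J ≤ invSide J ^ J := by gcongr; exact monotone_invSide hkJ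
      _ ≤ invSide J ^ (2 * J + 1) := Nat.pow_le_pow_right (invSide_pos J) (by omega)
      _ ≤ _ := by gcongr; exact Nat.le_mul_of_pos_right _ (hprod k)
  · obtain ⟨l, rfl⟩ : ∃ l, k = l + 1 := ⟨k - 1, by omega⟩
    have hbase : digitBase l ≤ invSide J * ∏ i ∈ Finset.range (l + 1), digitBase i := by
      rw [Finset.prod_range_succ, ← mul_assoc]
      exact Nat.le_mul_of_pos_left _ (mul_pos (invSide_pos J) (hprod l))
    have hfactor : ((l + 2) * invSide l ^ 4) ^ J ≤ digitBase l :=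
      (Nat.pow_le_pow_right (by have := invSide_pos l; positivity) (by omega)).trans
        (pow_le_digitBase l)
    calc invSide (l + 1) ^ J = ((l + 2) * invSide l ^ 4) ^ J * digitBase l ^ (2 * J) := by
          rw [invSide_succ, ← mul_assoc, mul_pow, ← pow_mul]
      _ ≤ digitBase l * digitBase l ^ (2 * J) := by gcongr
      _ = digitBase l ^ (2 * J + 1) := (pow_succ' _ _).symm
      _ ≤ _ := by gcongr

theorem invSide_rpow_le (J k : ℕ) :
    (invSide k : ℝ) ^ ((J : ℝ) / (2 * J + 1)) ≤
      invSide J * (∏ i ∈ Finset.range k, digitBase i : ℕ) := by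
  have hpow : (invSide k : ℝ) ^ (J : ℝ) ≤
      ((invSide J : ℝ) * (∏ i ∈ Finset.range k, digitBase i : ℕ)) ^ (2 * J + 1 : ℝ) := by
    exact_mod_cast invSide_pow_le J k
  rwa [div_eq_mul_inv, Real.rpow_mul (by positivity),
    Real.rpow_inv_le_iff_of_pos (by positivity) (by positivity) (by positivity)]

section CantorPoint

variable {m : ℕ}

/-- The numerators of step `k` of the Cantor point with parameter `t`: the mixed radix digits of
the coordinates of `t`, followed by two more that make the sum of the squares divisible by
`digitBase k`. -/
noncomputable def cantorDigit (k : ℕ) (t : Fin m → ℝ) : Fin (m + 2) → ℕ :=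
  Fin.append (fun i => radixDigit digitBase k (t i))
    (exists_append_dvd_sum_sq (prime_digitBase k) fun i => radixDigit digitBase k (t i)).choose

theorem cantorDigit_castAdd (k : ℕ) (t : Fin m → ℝ) (i : Fin m) :
    cantorDigit k t (Fin.castAdd 2 i) = radixDigit digitBase k (t i) :=
  Fin.append_left _ _ i

theorem cantorDigit_lt (k : ℕ) (t : Fin m → ℝ) (j : Fin (m + 2)) :
    cantorDigit k t j < digitBase k := by
  refine Fin.addCases (fun i => ?_) (fun i => ?_) j
  · rw [cantorDigit_castAdd]
    exact radixDigit_lt (digitBase_pos k) _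
  · rw [cantorDigit, Fin.append_right]
    exact (exists_append_dvd_sum_sq (prime_digitBase k) _).choose_spec.1 i

theorem digitBase_dvd_sum_cantorDigit_sq (k : ℕ) (t : Fin m → ℝ) :
    digitBase k ∣ ∑ j, cantorDigit k t j ^ 2 :=
  (exists_append_dvd_sum_sq (prime_digitBase k) _).choose_spec.2

theorem cantorDigit_congr {k : ℕ} {t s : Fin m → ℝ}
    (h : ∀ i, radixDigit digitBase k (t i) = radixDigit digitBase k (s i)) :
    cantorDigit k t = cantorDigit k s := by
  simp only [cantorDigit, h]

/-- The displacement from the corner of the cube of level `k` to that of the cube of level `k + 1`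
around the Cantor point with parameter `t`. -/
noncomputable def cornerStep (k : ℕ) (t : Fin m → ℝ) (j : Fin (m + 2)) : ℝ :=
  cantorDigit k t j / (invSide k * digitBase k)

/-- The lower corner of the cube of level `k` around the Cantor point with parameter `t`. -/
noncomputable def cubeCorner (k : ℕ) (t : Fin m → ℝ) : EuclideanSpace ℝ (Fin (m + 2)) :=
  WithLp.toLp 2 fun j => ∑ l ∈ Finset.range k, cornerStep l t j

/-- The point of the Cantor set with parameter `t`, which lies in the cubes of all levels with
parameter `t`. -/
noncomputable def cantorPoint (t : Fin m → ℝ) : EuclideanSpace ℝ (Fin (m + 2)) :=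
  WithLp.toLp 2 fun j => ∑' l, cornerStep l t j

theorem cubeCorner_succ (k : ℕ) (t : Fin m → ℝ) (j : Fin (m + 2)) :
    cubeCorner (k + 1) t j = cubeCorner k t j + cornerStep k t j :=
  Finset.sum_range_succ _ _

theorem cornerStep_nonneg (k : ℕ) (t : Fin m → ℝ) (j : Fin (m + 2)) : 0 ≤ cornerStep k t j := by
  unfold cornerStep
  positivity

theorem inv_invSide_succ_le (k : ℕ) :
    (invSide (k + 1) : ℝ)⁻¹ ≤ (2 * (invSide k * digitBase k) : ℝ)⁻¹ := by
  have hM := invSide_pos k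
  have hp := digitBase_pos k
  gcongr
  exact_mod_cast two_mul_invSide_mul_digitBase_le k

theorem cornerStep_add_le (k : ℕ) (t : Fin m → ℝ) (j : Fin (m + 2)) :
    cornerStep k t j + (invSide (k + 1) : ℝ)⁻¹ ≤ (invSide k : ℝ)⁻¹ := by
  have hM : (0 : ℝ) < invSide k := by exact_mod_cast invSide_pos k
  have hp : (0 : ℝ) < digitBase k := by exact_mod_cast digitBase_pos k
  have hdigit : (cantorDigit k t j : ℝ) + 1 ≤ digitBase k := by exact_mod_cast cantorDigit_lt k t j
  calc cornerStep k t j + (invSide (k + 1) : ℝ)⁻¹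
      ≤ cantorDigit k t j / (invSide k * digitBase k) + (invSide k * digitBase k : ℝ)⁻¹ :=
        add_le_add le_rfl ((inv_invSide_succ_le k).trans
          (inv_anti₀ (by positivity) (by linarith [mul_pos hM hp])))
    _ = (cantorDigit k t j + 1) / (invSide k * digitBase k) := by ring
    _ ≤ digitBase k / (invSide k * digitBase k) := by gcongr
    _ = (invSide k : ℝ)⁻¹ := by field_simp

theorem cantorPoint_mem_Icc (k : ℕ) (t : Fin m → ℝ) (j : Fin (m + 2)) :
    cantorPoint t j ∈ Set.Icc (cubeCorner k t j) (cubeCorner k t j + (invSide k : ℝ)⁻¹) :=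
  tsum_mem_Icc_of_add_le (d := fun l => cornerStep l t j) (r := fun l => (invSide l : ℝ)⁻¹)
    (fun l => cornerStep_nonneg l t j) (fun l => by positivity)
    (fun l => cornerStep_add_le l t j) k

theorem dist_cantorPoint_cubeCorner_le (k : ℕ) (t : Fin m → ℝ) :
    dist (cantorPoint t) (cubeCorner k t) ≤ √(m + 2) * (invSide k : ℝ)⁻¹ := by
  have h := dist_le_sqrt_card_mul (x := cantorPoint t) (y := cubeCorner k t)
    (r := (invSide k : ℝ)⁻¹) (by positivity) fun j => by
      obtain ⟨hlower, hupper⟩ := cantorPoint_mem_Icc k t j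
      rw [abs_of_nonneg] <;> linarith
  simpa using h

theorem cubeCorner_nonneg (k : ℕ) (t : Fin m → ℝ) (j : Fin (m + 2)) : 0 ≤ cubeCorner k t j := by
  simpa only [cubeCorner] using Finset.sum_nonneg fun l _ => cornerStep_nonneg l t j

theorem cantorPoint_mem_unitInterval (t : Fin m → ℝ) (j : Fin (m + 2)) :
    cantorPoint t j ∈ Set.Icc 0 1 := by
  simpa [cubeCorner, invSide] using cantorPoint_mem_Icc 0 t j

theorem exists_cubeCorner_eq_div (k : ℕ) (t : Fin m → ℝ) :
    ∃ V : Fin (m + 2) → ℕ, ∀ j, cubeCorner k t j = V j / invSide k := by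
  induction k with
  | zero => exact ⟨0, fun j => by simp [cubeCorner]⟩
  | succ k ih =>
    obtain ⟨V, hV⟩ := ih
    have hM : (invSide k : ℝ) ≠ 0 := by exact_mod_cast (invSide_pos k).ne'
    have hp : (digitBase k : ℝ) ≠ 0 := by exact_mod_cast (digitBase_pos k).ne'
    refine ⟨fun j => (V j * digitBase k + cantorDigit k t j) *
      ((k + 2) * invSide k ^ 3 * digitBase k), fun j => ?_⟩
    rw [cubeCorner_succ, hV, cornerStep, invSide_succ]
    push_cast
    field_simp

theorem exists_cubeCorner_succ_eq_div (k : ℕ) (t : Fin m → ℝ) :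
    ∃ a : Fin (m + 2) → ℕ, digitBase k ∣ ∑ j, a j ^ 2 ∧
      ∀ j, cubeCorner (k + 1) t j = a j / (invSide k * digitBase k) := by
  obtain ⟨V, hV⟩ := exists_cubeCorner_eq_div k t
  have hmod : ∑ j, (digitBase k * V j + cantorDigit k t j) ^ 2 ≡
      ∑ j, cantorDigit k t j ^ 2 [MOD digitBase k] :=
    Nat.ModEq.sum fun j _ => Nat.ModEq.pow 2 (by simp [Nat.ModEq])
  have hM : (invSide k : ℝ) ≠ 0 := by exact_mod_cast (invSide_pos k).ne'
  have hp : (digitBase k : ℝ) ≠ 0 := by exact_mod_cast (digitBase_pos k).ne'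
  refine ⟨fun j => digitBase k * V j + cantorDigit k t j,
    (hmod.dvd_iff dvd_rfl).mpr (digitBase_dvd_sum_cantorDigit_sq k t), fun j => ?_⟩
  rw [cubeCorner_succ, hV, cornerStep]
  push_cast
  field_simp

theorem exists_paraboloidDot_cubeCorner_eq_div (k : ℕ) (t s : Fin m → ℝ) :
    ∃ z : ℕ, paraboloidDot (cubeCorner (k + 1) t) (cubeCorner (k + 1) s) =
      z / (invSide k ^ 4 * digitBase k ^ 2 : ℕ) := by
  obtain ⟨a, ha, hat⟩ := exists_cubeCorner_succ_eq_div k t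
  obtain ⟨b, hb, hbs⟩ := exists_cubeCorner_succ_eq_div k s
  exact exists_paraboloidDot_eq_div (invSide_pos k) (digitBase_pos k) ha hb hat hbs

theorem cubeCorner_congr {k : ℕ} {t s : Fin m → ℝ}
    (h : ∀ l < k, ∀ i, radixDigit digitBase l (t i) = radixDigit digitBase l (s i)) :
    cubeCorner k t = cubeCorner k s := by
  refine congrArg (WithLp.toLp 2) (funext fun j => Finset.sum_congr rfl fun l hl => ?_)
  rw [cornerStep, cornerStep, cantorDigit_congr (h l (Finset.mem_range.mp hl))]

theorem abs_radixDigit_sub_div_le_dist {k : ℕ} {t s : Fin m → ℝ}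
    (h : ∀ l < k, ∀ i, radixDigit digitBase l (t i) = radixDigit digitBase l (s i)) (i : Fin m) :
    |(radixDigit digitBase k (t i) : ℝ) - radixDigit digitBase k (s i)| /
      (2 * (invSide k * digitBase k)) ≤ dist (cantorPoint t) (cantorPoint s) := by
  have hM : (0 : ℝ) < invSide k := by exact_mod_cast invSide_pos k
  have hp : (0 : ℝ) < digitBase k := by exact_mod_cast digitBase_pos k
  set q : ℝ := invSide k * digitBase k
  have hq0 : 0 < q := mul_pos hM hp
  rcases eq_or_ne (radixDigit digitBase k (t i)) (radixDigit digitBase k (s i)) with heq | hne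
  · simp [heq, dist_nonneg]
  have hone := one_le_abs_natCast_sub hne
  set a : ℝ := (radixDigit digitBase k (t i) : ℝ)
  set b : ℝ := (radixDigit digitBase k (s i) : ℝ)
  set j := Fin.castAdd 2 i
  have hcorner : cubeCorner (k + 1) t j - cubeCorner (k + 1) s j = (a - b) / q := by
    rw [cubeCorner_succ, cubeCorner_succ, cubeCorner_congr h, add_sub_add_left_eq_sub, cornerStep,
      cornerStep, cantorDigit_castAdd, cantorDigit_castAdd, sub_div]
  have hpoint : |(cantorPoint t j - cubeCorner (k + 1) t j) -
      (cantorPoint s j - cubeCorner (k + 1) s j)| ≤ |a - b| / (2 * q) := by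
    obtain ⟨ht, ht'⟩ := cantorPoint_mem_Icc (k + 1) t j
    obtain ⟨hs, hs'⟩ := cantorPoint_mem_Icc (k + 1) s j
    calc _ ≤ (invSide (k + 1) : ℝ)⁻¹ :=
          abs_sub_le_of_nonneg_of_le (sub_nonneg.mpr ht) (sub_le_iff_le_add'.mpr ht')
            (sub_nonneg.mpr hs) (sub_le_iff_le_add'.mpr hs')
      _ ≤ 1 / (2 * q) := (inv_invSide_succ_le k).trans_eq (one_div _).symm
      _ ≤ |a - b| / (2 * q) := by gcongr
  have htriangle : |a - b| / q ≤ |cantorPoint t j - cantorPoint s j| + |a - b| / (2 * q) := by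
    calc |a - b| / q = |(cantorPoint t j - cantorPoint s j) -
          ((cantorPoint t j - cubeCorner (k + 1) t j) -
            (cantorPoint s j - cubeCorner (k + 1) s j))| := by
          rw [sub_sub_sub_comm, sub_sub_cancel, sub_sub_cancel, hcorner, abs_div, abs_of_pos hq0]
      _ ≤ _ := (abs_sub _ _).trans (by gcongr)
  calc |a - b| / (2 * q) = |a - b| / q - |a - b| / (2 * q) := by ring
    _ ≤ |cantorPoint t j - cantorPoint s j| := by linarith
    _ ≤ dist (cantorPoint t) (cantorPoint s) := by
        simpa only [Real.dist_eq] using PiLp.dist_apply_le (cantorPoint t) (cantorPoint s) j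

theorem dist_le_mul_dist_cantorPoint_rpow (J : ℕ) {t s : Fin m → ℝ}
    (ht : ∀ i, t i ∈ Set.Ico 0 1) (hs : ∀ i, s i ∈ Set.Ico 0 1) :
    dist t s ≤
      4 * invSide J * dist (cantorPoint t) (cantorPoint s) ^ ((J : ℝ) / (2 * J + 1)) := by
  rcases eq_or_ne t s with rfl | hts
  · rw [dist_self]
    positivity
  obtain ⟨k, hlt, i₀, hne⟩ :=
    exists_first_radixDigit_ne (fun k => (prime_digitBase k).two_le) ht hs hts
  have hp : (0 : ℝ) < digitBase k := by exact_mod_cast digitBase_pos k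
  set P : ℝ := ((∏ i ∈ Finset.range k, digitBase i : ℕ) : ℝ) with hPdef
  have hP : 0 < P := by
    rw [hPdef]
    exact_mod_cast Finset.prod_pos fun i _ => digitBase_pos i
  set gap : Fin m → ℝ := fun i =>
    |(radixDigit digitBase k (t i) : ℝ) - radixDigit digitBase k (s i)|
  have : Nonempty (Fin m) := ⟨i₀⟩
  obtain ⟨i, hmax⟩ := Finite.exists_max gap
  have hgap_one : 1 ≤ gap i := (one_le_abs_natCast_sub hne).trans (hmax i₀)
  have hgap_le : gap i ≤ digitBase k :=
    abs_sub_le_of_nonneg_of_le (Nat.cast_nonneg _)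
      (by exact_mod_cast (radixDigit_lt (digitBase_pos k) _).le) (Nat.cast_nonneg _)
      (by exact_mod_cast (radixDigit_lt (digitBase_pos k) _).le)
  have hts_le : dist t s ≤ 2 * (gap i / digitBase k) / P := by
    refine (dist_pi_le_iff (by positivity)).mpr fun l => ?_
    calc dist (t l) (s l) ≤ (gap l + 1) / (∏ i ∈ Finset.range (k + 1), digitBase i : ℕ) :=
          abs_sub_le_of_radixDigit_eq digitBase_pos (ht l) (hs l) fun n hn => hlt n hn l
      _ = (gap l + 1) / (P * digitBase k) := by rw [Finset.prod_range_succ, Nat.cast_mul]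
      _ ≤ (2 * gap i) / (P * digitBase k) := by
          gcongr
          linarith [hmax l]
      _ = 2 * (gap i / digitBase k) / P := by field_simp
  refine hts_le.trans (two_mul_div_le_mul_rpow (by positivity) ?_ (by positivity)
    ((div_le_one hp).mpr hgap_le) (Nat.cast_pos.mpr (invSide_pos k)) hP (invSide_rpow_le J k) ?_)
  · rw [div_le_one (by positivity)]
    linarith [(Nat.cast_nonneg J : (0 : ℝ) ≤ J)]
  · calc gap i / digitBase k / (2 * invSide k)
        = gap i / (2 * (invSide k * digitBase k)) := by rw [div_div]; ring_nf
      _ ≤ _ := abs_radixDigit_sub_div_le_dist hlt i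

end CantorPoint

/-- The Cantor set in `ℝ^(m + 2)` whose lift to the paraboloid is the counterexample. The closure
makes it compact, although `cantorPoint` is not continuous. -/
def paraboloidCantorSet (m : ℕ) : Set (EuclideanSpace ℝ (Fin (m + 2))) :=
  closure (Set.range (cantorPoint (m := m)))

theorem norm_le_of_mem_paraboloidCantorSet {m : ℕ} {u : EuclideanSpace ℝ (Fin (m + 2))}
    (hu : u ∈ paraboloidCantorSet m) : ‖u‖ ≤ √(m + 2) := by
  have hsub : paraboloidCantorSet m ⊆ Metric.closedBall 0 √(m + 2) := by
    refine closure_minimal ?_ Metric.isClosed_closedBall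
    rintro _ ⟨t, rfl⟩
    simpa using norm_le_sqrt_card_of_mem_Icc (cantorPoint_mem_unitInterval t)
  simpa using hsub hu

theorem isCompact_paraboloidCantorSet (m : ℕ) : IsCompact (paraboloidCantorSet m) :=
  Metric.isCompact_of_isClosed_isBounded isClosed_closure
    (isBounded_iff_forall_norm_le.mpr ⟨_, fun _ hu => norm_le_of_mem_paraboloidCantorSet hu⟩)

theorem exists_dist_cubeCorner_le {m : ℕ} {u : EuclideanSpace ℝ (Fin (m + 2))}
    (hu : u ∈ paraboloidCantorSet m) (k : ℕ) :
    ∃ t : Fin m → ℝ, dist u (cubeCorner k t) ≤ (√(m + 2) + 1) * (invSide k : ℝ)⁻¹ := by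
  have hM := invSide_pos k
  obtain ⟨_, ⟨t, rfl⟩, hut⟩ := Metric.mem_closure_iff.mp hu (invSide k : ℝ)⁻¹ (by positivity)
  refine ⟨t, ?_⟩
  linarith [dist_triangle u (cantorPoint t) (cubeCorner k t), dist_cantorPoint_cubeCorner_le k t]

theorem norm_cubeCorner_le {m : ℕ} (k : ℕ) (t : Fin m → ℝ) : ‖cubeCorner k t‖ ≤ √(m + 2) := by
  simpa using norm_le_sqrt_card_of_mem_Icc (u := cubeCorner k t) fun j =>
    ⟨cubeCorner_nonneg k t j,
      (cantorPoint_mem_Icc k t j).1.trans (cantorPoint_mem_unitInterval t j).2⟩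

theorem mul_div_le_dimH_paraboloidCantorSet (m : ℕ) {J : ℕ} (hJ : 0 < J) :
    ENNReal.ofReal (m * (J / (2 * J + 1))) ≤ dimH (paraboloidCantorSet m) := by
  set α : NNReal := J / (2 * J + 1) with hαdef
  have hα : 0 < α := by positivity
  have hαcoe : (α : ℝ) = J / (2 * J + 1) := by simp [hαdef]
  set cube := Set.univ.pi fun _ : Fin m => Set.Ico (0 : ℝ) 1
  have hholder : ∀ t ∈ cube, ∀ s ∈ cube,
      edist t s ≤ (4 * invSide J : NNReal) * edist (cantorPoint t) (cantorPoint s) ^ (α : ℝ) := by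
    intro t ht s hs
    have hdist := dist_le_mul_dist_cantorPoint_rpow J (fun i => ht i trivial) fun i => hs i trivial
    rw [edist_dist, edist_dist, ENNReal.ofReal_rpow_of_nonneg dist_nonneg α.coe_nonneg,
      ← ENNReal.ofReal_coe_nnreal, ← ENNReal.ofReal_mul (NNReal.coe_nonneg _), hαcoe]
    exact ENNReal.ofReal_le_ofReal (by exact_mod_cast hdist)
  have hdim : (m : ℝ≥0∞) ≤ dimH (cantorPoint '' cube) / α :=
    by
    simpa [cube, dimH_univ_pi_Ico] using dimH_le_dimH_image_div hα hholder
  calc ENNReal.ofReal (m * (J / (2 * J + 1))) = m * α := by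
        rw [← hαcoe, ENNReal.ofReal_mul (Nat.cast_nonneg m), ENNReal.ofReal_natCast,
          ENNReal.ofReal_coe_nnreal]
    _ ≤ dimH (cantorPoint '' cube) := ENNReal.mul_le_of_le_div hdim
    _ ≤ dimH (paraboloidCantorSet m) :=
        dimH_mono ((Set.image_subset_range _ _).trans subset_closure)

theorem half_le_dimH_paraboloidCantorSet (m : ℕ) :
    ENNReal.ofReal (m / 2) ≤ dimH (paraboloidCantorSet m) := by
  have hlim : Filter.Tendsto (fun J : ℕ => (J : ℝ) / (2 * J + 1)) Filter.atTop (nhds (1 / 2)) := by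
    simpa [add_comm] using tendsto_add_mul_div_add_mul_atTop_nhds (0 : ℝ) 1 1 two_ne_zero
  have hlim' := ENNReal.tendsto_ofReal (hlim.const_mul (m : ℝ))
  rw [mul_one_div] at hlim'
  exact le_of_tendsto hlim' ((Filter.eventually_gt_atTop 0).mono fun J hJ =>
    mul_div_le_dimH_paraboloidCantorSet m hJ)

theorem paraboloidDot_paraboloidCantorSet_near_grid {m : ℕ} {u v : EuclideanSpace ℝ (Fin (m + 2))}
    (hu : u ∈ paraboloidCantorSet m) (hv : v ∈ paraboloidCantorSet m) (k : ℕ) :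
    ∃ z : ℕ, z ≤ ((m + 2) + (m + 2) ^ 2) * (invSide k ^ 4 * digitBase k ^ 2) ∧
      |paraboloidDot u v - z / (invSide k ^ 4 * digitBase k ^ 2 : ℕ)| ≤
        (2 * √(m + 2) + 4 * √(m + 2) ^ 3) * (√(m + 2) + 1) * (invSide (k + 1) : ℝ)⁻¹ := by
  obtain ⟨t, hut⟩ := exists_dist_cubeCorner_le hu (k + 1)
  obtain ⟨s, hvs⟩ := exists_dist_cubeCorner_le hv (k + 1)
  obtain ⟨z, hz⟩ := exists_paraboloidDot_cubeCorner_eq_div k t s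
  have hM := invSide_pos k
  have hp := digitBase_pos k
  have hdist := abs_paraboloidDot_sub_le (norm_le_of_mem_paraboloidCantorSet hu)
    (norm_le_of_mem_paraboloidCantorSet hv) (norm_cubeCorner_le _ t) (norm_cubeCorner_le _ s)
    hut hvs
  rw [hz, ← mul_assoc] at hdist
  refine ⟨z, ?_, hdist⟩
  have hle := paraboloidDot_le (norm_cubeCorner_le (k + 1) t) (norm_cubeCorner_le (k + 1) s)
  rw [hz, div_le_iff₀ (by positivity), show √((m : ℝ) + 2) ^ 4 = (√(m + 2) ^ 2) ^ 2 by ring,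
    Real.sq_sqrt (by positivity)] at hle
  exact_mod_cast hle

theorem volume_image2_paraboloidDot_paraboloidCantorSet (m : ℕ) :
    volume (Set.image2 paraboloidDot (paraboloidCantorSet m) (paraboloidCantorSet m)) = 0 := by
  set E := Set.image2 paraboloidDot (paraboloidCantorSet m) (paraboloidCantorSet m)
  set B : ℕ := (m + 2) + (m + 2) ^ 2
  set C : ℝ := (2 * √(m + 2) + 4 * √(m + 2) ^ 3) * (√(m + 2) + 1) with hC
  have hbound : ∀ k : ℕ,
      volume E ≤ ENNReal.ofReal (2 * (B + 1) * C / ((k + 2 : ℕ) : ℝ)) := fun k => by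
    have hL : 0 < invSide k ^ 4 * digitBase k ^ 2 :=
      mul_pos (pow_pos (invSide_pos k) 4) (pow_pos (digitBase_pos k) 2)
    have hvol := volume_le_of_near_grid (Set.forall_mem_image2.mpr
      fun u (hu : u ∈ paraboloidCantorSet m) v (hv : v ∈ paraboloidCantorSet m) =>
        paraboloidDot_paraboloidCantorSet_near_grid hu hv k)
    rw [invSide_succ, ← hC] at hvol
    refine hvol.trans (ENNReal.ofReal_le_ofReal ?_)
    generalize invSide k ^ 4 * digitBase k ^ 2 = L at hL
    have hL' : (1 : ℝ) ≤ L := by exact_mod_cast hL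
    calc ((B : ℝ) * L + 1) * (2 * (C * (((k + 2) * L : ℕ) : ℝ)⁻¹))
        ≤ (B * L + L) * (2 * (C * (((k + 2) * L : ℕ) : ℝ)⁻¹)) := by gcongr
      _ = 2 * (B + 1) * C / ((k + 2 : ℕ) : ℝ) := by
          push_cast
          field_simp
  have hlim : Filter.Tendsto (fun k : ℕ => ENNReal.ofReal (2 * (B + 1) * C / ((k + 2 : ℕ) : ℝ)))
      Filter.atTop (nhds 0) := by
    simpa using ENNReal.tendsto_ofReal ((tendsto_const_div_atTop_nhds_zero_nat
      (2 * (B + 1) * C)).comp (Filter.tendsto_add_atTop_nat 2))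
  exact nonpos_iff_eq_zero.mp (ge_of_tendsto' hlim hbound)

/-! ### The lift to the paraboloid -/

/-- The point `(u, |u|²)` of the paraboloid. -/
noncomputable def paraboloidLift {n : ℕ} (u : EuclideanSpace ℝ (Fin n)) :
    EuclideanSpace ℝ (Fin (n + 1)) :=
  WithLp.toLp 2 (Fin.snoc (α := fun _ => ℝ) u (‖u‖ ^ 2))

section ParaboloidLift

variable {n : ℕ}

theorem paraboloidLift_mem_stdParaboloid (u : EuclideanSpace ℝ (Fin n)) :
    paraboloidLift u ∈ stdParaboloid (n + 1) :=
  ⟨u, funext fun i => by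
    refine Fin.lastCases ?_ (fun j => ?_) i <;> simp [paraboloidLift]⟩

theorem inner_paraboloidLift (u v : EuclideanSpace ℝ (Fin n)) :
    ⟪paraboloidLift u, paraboloidLift v⟫ = paraboloidDot u v := by
  simp [paraboloidLift, paraboloidDot, PiLp.inner_apply, Fin.sum_univ_castSucc, mul_comm]

theorem continuous_paraboloidLift : Continuous (paraboloidLift (n := n)) := by
  unfold paraboloidLift
  fun_prop

theorem antilipschitzWith_paraboloidLift : AntilipschitzWith 1 (paraboloidLift (n := n)) :=
  AntilipschitzWith.of_le_mul_dist fun u v => by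
    rw [NNReal.coe_one, one_mul, EuclideanSpace.dist_eq, EuclideanSpace.dist_eq]
    gcongr
    rw [Fin.sum_univ_castSucc]
    simp [paraboloidLift]

theorem dotSet_image_paraboloidLift (K : Set (EuclideanSpace ℝ (Fin n))) :
    dotSet (paraboloidLift '' K) = Set.image2 paraboloidDot K K := by
  ext r
  simp [dotSet, Set.mem_image2, inner_paraboloidLift]

end ParaboloidLift

theorem paraboloid_counterexample_half_general (d : ℕ) (hd : 3 ≤ d) :
    ∃ F : Set (EuclideanSpace ℝ (Fin d)), F ⊆ stdParaboloid d ∧ IsCompact F ∧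
      ENNReal.ofReal (((d : ℝ) - 3) / 2) ≤ dimH F ∧ volume (dotSet F) = 0 := by
  obtain ⟨m, rfl⟩ := Nat.exists_eq_add_of_le' hd
  refine ⟨paraboloidLift '' paraboloidCantorSet m,
    Set.image_subset_iff.mpr fun u _ => paraboloidLift_mem_stdParaboloid u,
    (isCompact_paraboloidCantorSet m).image continuous_paraboloidLift, ?_, ?_⟩
  · rw [Nat.cast_add, Nat.cast_ofNat, add_sub_cancel_right]
    exact (half_le_dimH_paraboloidCantorSet m).trans
      (antilipschitzWith_paraboloidLift.le_dimH_image _)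
  · rw [dotSet_image_paraboloidLift, volume_image2_paraboloidDot_paraboloidCantorSet]

/-- For `d ≥ 5` and every sufficiently small `ε > 0` there is a compact subset `F` of
the standard paraboloid `P_d` with Hausdorff dimension at least `(d-3)/2 - ε` whose dot
product set has Lebesgue measure zero. -/
theorem paraboloid_counterexample_half
    (d : ℕ) (hd : 5 ≤ d) :
    ∃ ε₀ : ℝ, 0 < ε₀ ∧ ∀ ε : ℝ, 0 < ε → ε < ε₀ →
      ∃ F : Set (EuclideanSpace ℝ (Fin d)), F ⊆ stdParaboloid d ∧ IsCompact F ∧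
        ENNReal.ofReal (((d : ℝ) - 3) / 2 - ε) ≤ dimH F ∧ volume (dotSet F) = 0 := by
  obtain ⟨F, hF, hcompact, hdim, hvolume⟩ :=
    paraboloid_counterexample_half_general d (by omega)
  exact ⟨1, one_pos, fun ε hε _ => ⟨F, hF, hcompact,
    (ENNReal.ofReal_le_ofReal (by linarith)).trans hdim, hvolume⟩⟩
end

section
/- Let d ≥ 4. For every sufficiently small ε > 0 there exists a set J ⊆ ℝ^d of positive d-dimensional Lebesgue measure such that for every a ∈ J there exists a compact subset F_a of the translated paraboloid a + P_d with Hausdorff dimension at least (d−2)/2 − ε whose dot product set Π(F_a) has one-dimensional Lebesgue measure zero. -/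
open MeasureTheory
open scoped RealInnerProductSpace ENNReal

/-!
Write `d = m + 1`. Over `u ∈ ℝ^m` the paraboloid translated by `a` has the point `(u, h_a(u))`,
where `h_a(u) = a_last + ∑ (u_i - a_i)²`. Suppose that, for exponents `A k < B (k + 1)`, all
coordinates of the points of a bounded set `F` lie within `O(2^(-B (k + 1)))` of the lattice
`2^(-A k) ℤ`. Then the dot products of points of `F` lie within `O(2^(-B (k + 1)))` of
`4^(-A k) ℤ`, and `Π(F)` is null as soon as `B (k + 1) - 2 A k` tends to infinity.

The set `F` is the lift of a Cantor set `K ⊆ [0, 1]^m`, whose points are close to lattice points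
`n / 2^(A k)` at every stage `k`. The heights are close to `2^(-A k) ℤ` as well if only good lattice
points are used, those for which `2^(A k) h_a(n / 2^(A k))` is within `2^(-(B (k + 1) - A k)) / 2`
of an integer. For `a` uniform in the unit cube these phases are uniform modulo one and pairwise
independent: for `n ≠ n'` the difference of the two phases is a nonconstant affine function, with
integer slopes, of the coordinates `a_i`, while `a_last` enters each of them with the slope
`2^(A k)`. By Chebyshev's inequality, outside a set of `a` of measure at most `2^(-(k + 2))`, every
dyadic cell of stage `k` contains at least half of the expected number of good lattice points, so
that with positive probability this holds at every stage.

For such `a`, the binary digits of a point `y ∈ [0, 1)^m` select, at each stage, a cell and a good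
lattice point in it. This codes `y` by a point of `K`, and the inverse of the coding is Hölder of
exponent `θ`, whence `dim_H K ≥ m θ`. Since a good point has probability
`2^(-(B (k + 1) - A k)) ≈ 2^(-A k)` when `B (k + 1)` is close to `2 A k`, about `2^((m - 1) A k)`
cubes of side `2^(-B (k + 1)) ≈ 2^(-2 A k)` are available at stage `k`, which allows `m θ` as close
to `(m - 1) / 2 = (d - 2) / 2` as desired.
-/

open Filter ProbabilityTheory Set Topology
open scoped Finset NNReal

/-! ### Uniform distribution modulo one -/

lemma measurePreserving_coe_affine {k : ℤ} (hk : k ≠ 0) (a c : ℝ) :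
    MeasurePreserving (fun x : ℝ => ((k * x + c : ℝ) : UnitAddCircle))
      (volume.restrict (Ioc a (a + 1))) volume := by
  convert (measurePreserving_add_right volume (c : UnitAddCircle)).comp
    ((Measure.measurePreserving_zsmul volume hk).comp (UnitAddCircle.measurePreserving_mk a))
    using 2 with x
  simp [← zsmul_eq_mul]

section Resampling

variable {ι : Type*} [Fintype ι] [DecidableEq ι] {α : ι → Type*} [∀ i, MeasurableSpace (α i)]
  {μ : ∀ i, Measure (α i)} [∀ i, IsProbabilityMeasure (μ i)] {β γ : Type*} [MeasurableSpace β]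
  [MeasurableSpace γ] {ρ : Measure β} {ν : Measure γ}

lemma lintegral_pi_eq_lintegral_update (j : ι) {f : (∀ i, α i) → ℝ≥0∞} (hf : Measurable f) :
    ∫⁻ x, f x ∂Measure.pi μ = ∫⁻ x, ∫⁻ t, f (Function.update x j t) ∂μ j ∂Measure.pi μ := by
  have hupdate : Measurable fun x => ∫⁻ t, f (Function.update x j t) ∂μ j :=
    Measurable.lintegral_prod_right (hf.comp measurable_update')
  refine lintegral_eq_of_lmarginal_eq {j} hf hupdate ?_
  simp only [lmarginal_singleton, Function.update_idem, lintegral_const, measure_univ, mul_one]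

lemma measurePreserving_prodMk_of_update (j : ι) [SFinite ρ] {X : (∀ i, α i) → β}
    {Y : (∀ i, α i) → γ} (hX : Measurable X)
    (hXj : ∀ a, MeasurePreserving (fun t => X (Function.update a j t)) (μ j) ρ)
    (hY : MeasurePreserving Y (Measure.pi μ) ν)
    (hYj : ∀ a t, Y (Function.update a j t) = Y a) :
    MeasurePreserving (fun a => (X a, Y a)) (Measure.pi μ) (ρ.prod ν) := by
  have hXY : Measurable fun a => (X a, Y a) := hX.prodMk hY.measurable
  have : IsProbabilityMeasure ν := hY.map_eq ▸ Measure.isProbabilityMeasure_map hY.aemeasurable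
  refine ⟨hXY, Measure.ext fun s hs => ?_⟩
  have hind : Measurable (s.indicator (1 : β × γ → ℝ≥0∞)) := measurable_one.indicator hs
  calc Measure.map (fun a => (X a, Y a)) (Measure.pi μ) s
      = ∫⁻ a, s.indicator 1 (X a, Y a) ∂Measure.pi μ := by
        rw [← lintegral_map hind hXY, lintegral_indicator_one hs]
    _ = ∫⁻ a, ∫⁻ t, s.indicator 1 (X (Function.update a j t), Y a) ∂μ j ∂Measure.pi μ := by
        simpa only [Function.comp_apply, hYj] using
          lintegral_pi_eq_lintegral_update (μ := μ) j (hind.comp hXY)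
    _ = ∫⁻ a, ∫⁻ x, s.indicator 1 (x, Y a) ∂ρ ∂Measure.pi μ :=
        lintegral_congr fun a => (hXj a).lintegral_comp (hind.comp measurable_prodMk_right)
    _ = ∫⁻ y, ∫⁻ x, s.indicator 1 (x, y) ∂ρ ∂ν :=
        hY.lintegral_comp hind.lintegral_prod_left'
    _ = ρ.prod ν s := by
        rw [← lintegral_prod_symm _ hind.aemeasurable, lintegral_indicator_one hs]

lemma measurePreserving_of_update (j : ι) [SFinite ρ] {X : (∀ i, α i) → β} (hX : Measurable X)
    (hXj : ∀ a, MeasurePreserving (fun t => X (Function.update a j t)) (μ j) ρ) :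
    MeasurePreserving X (Measure.pi μ) ρ :=
  have hconst : MeasurePreserving (fun _ => ()) (Measure.pi μ) (Measure.dirac ()) :=
    ⟨measurable_const, by simp [Measure.map_const]⟩
  measurePreserving_fst.comp
    (measurePreserving_prodMk_of_update j hX hXj hconst fun _ _ => rfl)

end Resampling

section UnitCube

/-- Lebesgue measure on the unit cube `(0, 1]^ι`. -/
noncomputable def unitCubeMeasure (ι : Type*) [Fintype ι] : Measure (ι → ℝ) :=
  Measure.pi fun _ => volume.restrict (Ioc 0 1)

instance isProbabilityMeasure_restrict_Ioc :
    IsProbabilityMeasure (volume.restrict (Ioc (0 : ℝ) 1)) := ⟨by simp⟩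

variable (ι : Type*) [Fintype ι]

instance isProbabilityMeasure_unitCubeMeasure : IsProbabilityMeasure (unitCubeMeasure ι) := by
  unfold unitCubeMeasure; infer_instance

lemma unitCubeMeasure_eq_restrict :
    unitCubeMeasure ι = volume.restrict (univ.pi fun _ => Ioc 0 1) :=
  (Measure.restrict_pi_pi _ _).symm

variable {ι} [DecidableEq ι]

lemma measurePreserving_of_update_eq_affine {X : (ι → ℝ) → UnitAddCircle} (hX : Measurable X)
    (j : ι) {k : ℤ} (hk : k ≠ 0)
    (hXj : ∀ a, ∃ c : ℝ, ∀ t : ℝ, X (Function.update a j t) = ((k * t + c : ℝ) : UnitAddCircle)) :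
    MeasurePreserving X (unitCubeMeasure ι) volume := by
  refine measurePreserving_of_update j hX fun a => ?_
  obtain ⟨c, hc⟩ := hXj a
  simpa only [hc, zero_add] using measurePreserving_coe_affine hk 0 c

end UnitCube

section Phase

variable {m : ℕ}

/-- The height over `u` of the paraboloid translated by `a`. -/
noncomputable def paraboloidHeight (a : Fin (m + 1) → ℝ) (u : Fin m → ℝ) : ℝ :=
  a (Fin.last m) + ∑ i, (u i - a i.castSucc) ^ 2

/-- The position modulo `1 / q`, rescaled to the unit circle, of the height over the lattice point
`n / q`. -/
noncomputable def phase (q : ℕ) (n : Fin m → ℕ) (a : Fin (m + 1) → ℝ) : UnitAddCircle :=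
  ((q * paraboloidHeight a fun i => n i / q : ℝ) : UnitAddCircle)

variable {q : ℕ} {n n' : Fin m → ℕ}

lemma measurable_phase : Measurable (phase q n) := by
  unfold phase paraboloidHeight
  fun_prop

lemma phase_update_last (a : Fin (m + 1) → ℝ) (t : ℝ) :
    phase q n (Function.update a (Fin.last m) t)
      = (((q : ℤ) * t + q * ∑ i, (n i / q - a i.castSucc) ^ 2 : ℝ) : UnitAddCircle) := by
  have hne : ∀ i : Fin m, i.castSucc ≠ Fin.last m := fun i => (Fin.castSucc_lt_last i).ne
  simp only [phase, paraboloidHeight, Function.update_self, Function.update_of_ne (hne _),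
    mul_add, Int.cast_natCast]

lemma measurePreserving_phase (hq : q ≠ 0) :
    MeasurePreserving (phase q n) (unitCubeMeasure (Fin (m + 1))) volume :=
  measurePreserving_of_update_eq_affine measurable_phase (Fin.last m) (k := q) (mod_cast hq)
    fun a => ⟨_, phase_update_last a⟩

-- The quadratic terms in `a` cancel, which leaves an affine function with integer slopes.
lemma phase_sub_phase (hq : q ≠ 0) (a : Fin (m + 1) → ℝ) :
    phase q n' a - phase q n a
      = ((∑ i, (2 * ((n i : ℤ) - n' i : ℤ) * a i.castSucc + ((n' i : ℝ) ^ 2 - n i ^ 2) / q) : ℝ) :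
        UnitAddCircle) := by
  rw [phase, phase, ← AddCircle.coe_sub]
  congr 1
  simp only [paraboloidHeight, mul_add, Finset.mul_sum]
  rw [add_sub_add_left_eq_sub, ← Finset.sum_sub_distrib]
  refine Finset.sum_congr rfl fun i _ => ?_
  push_cast
  field_simp
  ring

lemma measurePreserving_phase_sub_phase (hq : q ≠ 0) (hn : n ≠ n') :
    MeasurePreserving (fun a => phase q n' a - phase q n a)
      (unitCubeMeasure (Fin (m + 1))) volume := by
  obtain ⟨j, hj⟩ := Function.ne_iff.mp hn
  refine measurePreserving_of_update_eq_affine (measurable_phase.sub measurable_phase) j.castSucc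
    (k := 2 * (n j - n' j)) (by omega) fun a => ?_
  refine ⟨((n' j : ℝ) ^ 2 - n j ^ 2) / q + ∑ i ∈ Finset.univ.erase j,
    (2 * ((n i : ℤ) - n' i : ℤ) * a i.castSucc + ((n' i : ℝ) ^ 2 - n i ^ 2) / q), fun t => ?_⟩
  rw [phase_sub_phase hq, ← Finset.add_sum_erase _ _ (Finset.mem_univ j), ← add_assoc]
  congr 2
  · simp
  · refine Finset.sum_congr rfl fun i hi => ?_
    rw [Function.update_of_ne ((Fin.castSucc_injective m).ne (Finset.ne_of_mem_erase hi))]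

lemma indepFun_phase (hq : q ≠ 0) (hn : n ≠ n') :
    phase q n ⟂ᵢ[unitCubeMeasure (Fin (m + 1))] phase q n' := by
  have hsub := measurePreserving_phase_sub_phase hq hn
  have hjoint : MeasurePreserving (fun a => (phase q n a, phase q n' a - phase q n a))
      (unitCubeMeasure (Fin (m + 1))) (volume.prod volume) := by
    refine measurePreserving_prodMk_of_update (Fin.last m) measurable_phase (fun a => ?_) hsub
      fun a t => ?_
    · simpa only [phase_update_last, zero_add] using
        measurePreserving_coe_affine (k := q) (mod_cast hq) 0 _
    · simp only [phase_sub_phase hq, Function.update_of_ne (Fin.castSucc_lt_last _).ne]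
  rw [indepFun_iff_map_prod_eq_prod_map_map measurable_phase.aemeasurable
    measurable_phase.aemeasurable, (measurePreserving_phase hq).map_eq,
    (measurePreserving_phase hq).map_eq, ← ((measurePreserving_prod_add _ _).comp hjoint).map_eq]
  simp only [Function.comp_def, add_sub_cancel]

end Phase

section Chebyshev

variable {Ω ι β : Type*} [MeasurableSpace Ω] {μ : Measure Ω} [MeasurableSpace β]
  {t : Set β}

lemma integral_indicator_one_comp {f : Ω → β} (hf : Measurable f) (ht : MeasurableSet t) :
    μ[t.indicator (1 : β → ℝ) ∘ f] = μ.real (f ⁻¹' t) :=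
  integral_indicator_one (hf ht)

variable [IsProbabilityMeasure μ]

lemma memLp_two_indicator_comp {f : Ω → β} (hf : Measurable f) (ht : MeasurableSet t) :
    MemLp (t.indicator (1 : β → ℝ) ∘ f) 2 μ :=
  MemLp.of_bound ((measurable_one.indicator ht).comp hf).aestronglyMeasurable 1
    (.of_forall fun _ => (norm_indicator_le_norm_self _ _).trans norm_one.le)

lemma variance_indicator_comp_le {f : Ω → β} (hf : Measurable f) (ht : MeasurableSet t) :
    Var[t.indicator 1 ∘ f; μ] ≤ μ.real (f ⁻¹' t) := by
  refine (variance_le_expectation_sq (memLp_two_indicator_comp hf ht).1).trans_eq ?_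
  rw [← integral_indicator_one_comp hf ht]
  congr 1 with ω
  by_cases hω : f ω ∈ t <;> simp [hω]

lemma measureReal_card_filter_le {X : ι → Ω → β} {p : ℝ} {s : Finset ι} (hs : s.Nonempty)
    (hX : ∀ i, Measurable (X i)) (hindep : (s : Set ι).Pairwise fun i j => X i ⟂ᵢ[μ] X j)
    (ht : MeasurableSet t) [DecidablePred (· ∈ t)] (hp : 0 < p)
    (hXp : ∀ i ∈ s, μ.real (X i ⁻¹' t) = p) :
    μ.real {ω | (#{i ∈ s | X i ω ∈ t} : ℝ) ≤ #s * p / 2} ≤ 4 / (#s * p) := by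
  have hN : (0 : ℝ) < #s * p := mul_pos (mod_cast hs.card_pos) hp
  set Y : ι → Ω → ℝ := fun i => t.indicator 1 ∘ X i
  have hY : ∀ i ∈ s, MemLp (Y i) 2 μ := fun i _ => memLp_two_indicator_comp (hX i) ht
  have hcount : ∀ ω, (∑ i ∈ s, Y i) ω = #{i ∈ s | X i ω ∈ t} := fun ω => by
    simp [Y, indicator_apply]
  have hmean : μ[∑ i ∈ s, Y i] = #s * p := by
    simp_rw [Finset.sum_apply]
    rw [integral_finsetSum s fun i hi => (hY i hi).integrable one_le_two, ← nsmul_eq_mul,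
      ← Finset.sum_const]
    exact Finset.sum_congr rfl fun i hi => (integral_indicator_one_comp (hX i) ht).trans (hXp i hi)
  have hvar : Var[∑ i ∈ s, Y i; μ] ≤ #s * p := by
    rw [IndepFun.variance_sum hY fun i hi j hj hij => (hindep hi hj hij).comp
      (measurable_one.indicator ht) (measurable_one.indicator ht), ← nsmul_eq_mul]
    exact Finset.sum_le_card_nsmul _ _ _ fun i hi =>
      (variance_indicator_comp_le (hX i) ht).trans_eq (hXp i hi)
  have hsubset : {ω | (#{i ∈ s | X i ω ∈ t} : ℝ) ≤ #s * p / 2}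
      ⊆ {ω | #s * p / 2 ≤ |(∑ i ∈ s, Y i) ω - μ[∑ i ∈ s, Y i]|} := fun ω hω => by
    rw [mem_ofPred_eq] at hω ⊢
    rw [hcount, hmean, abs_sub_comm]
    exact le_abs.mpr (.inl (by linarith))
  calc μ.real {ω | (#{i ∈ s | X i ω ∈ t} : ℝ) ≤ #s * p / 2}
      ≤ Var[∑ i ∈ s, Y i; μ] / (#s * p / 2) ^ 2 := by
        refine ENNReal.toReal_le_of_le_ofReal (div_nonneg (variance_nonneg _ _) (sq_nonneg _)) ?_
        exact (measure_mono hsubset).trans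
          (meas_ge_le_variance_div_sq (memLp_finsetSum' s hY) (half_pos hN))
    _ ≤ #s * p / (#s * p / 2) ^ 2 := by gcongr
    _ = 4 / (#s * p) := by field_simp; norm_num

end Chebyshev

/-! ### The exponents of the construction -/

/-- The exponents of the multiscale construction in dimension `m` with Hölder exponent `θ`. Stage
`k` starts from a dyadic cube of side `2^(-B k)`, splits it into cells of side `2^(-(B k + T k))`,
selects points of the lattice `2^(-A k) ℤ^m` inside the cells, and passes to the cubes of side
`2^(-B (k + 1))` at these points. The first `E k` binary digits of a code determine the first `k`
choices: `T k` digits per coordinate select a cell and `T k` more a lattice point in it. -/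
structure Scales (m : ℕ) (θ : ℝ) where
  A : ℕ → ℕ
  B : ℕ → ℕ
  T : ℕ → ℕ
  E : ℕ → ℕ
  exponent_pos : 0 < θ
  exponent_le_one : θ ≤ 1
  E_zero : E 0 = 0
  E_succ : ∀ k, E (k + 1) = E k + T k + T k
  le_E : ∀ k, k ≤ E k
  cell_le : ∀ k, B k + T k ≤ A k
  gap : ∀ k, 2 * A k + k < B (k + 1)
  mul_A_le : ∀ k, θ * A k ≤ E k + T k
  mul_B_le : ∀ k, θ * B k ≤ E k
  expected_points : ∀ k, 2 * m * (B k + T k) + B (k + 1) + k + 4 ≤ (m + 1) * A k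

/-- The exponents `B`, determined by `B (k + 1) = 2 A k + k + 1` and `A k = 2 m R (B k + k + 2)`. -/
def cubeExponent (m R : ℕ) : ℕ → ℕ
  | 0 => 0
  | k + 1 => 2 * (2 * m * R * (cubeExponent m R k + k + 2)) + k + 1

/-- The common unit of `A k` and `T k`, chosen slightly larger than `B k`. -/
def stageUnit (m R k : ℕ) : ℕ := cubeExponent m R k + k + 2

section ScalesExist

variable {m R S : ℕ}

lemma div_two_mul_mul_le_one (hSR : S + 2 + R = m * R) : (S / (2 * m * R) : ℝ) ≤ 1 := by
  refine div_le_one_of_le₀ ?_ (by positivity)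
  norm_cast
  nlinarith

lemma div_mul_cubeExponent_le (hm : 0 < m) (hR : 0 < R) (hSR : S + 2 + R = m * R) (k : ℕ) :
    (S / (2 * m * R) : ℝ) * cubeExponent m R k
      ≤ ↑(∑ j ∈ Finset.range k, 2 * ((S + 1) * stageUnit m R j)) := by
  cases k with
  | zero => simp [cubeExponent]
  | succ k =>
    have hk : (k + 1 : ℝ) ≤ stageUnit m R k := by norm_cast; unfold stageUnit; omega
    calc (S / (2 * m * R) : ℝ) * ↑(cubeExponent m R (k + 1))
        = 2 * S * stageUnit m R k + S / (2 * m * R) * (k + 1) := by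
          simp only [cubeExponent, stageUnit]; push_cast; field_simp; ring
      _ ≤ 2 * S * stageUnit m R k + 1 * stageUnit m R k := by
          gcongr
          exact div_two_mul_mul_le_one hSR
      _ ≤ ↑(2 * ((S + 1) * stageUnit m R k)) := by push_cast; linarith
      _ ≤ _ := by rw [Finset.sum_range_succ]; exact mod_cast Nat.le_add_left _ _

lemma nonempty_scales (hm : 2 ≤ m) (hR : 0 < R) (hS : 0 < S) (hSR : S + 2 + R = m * R) :
    Nonempty (Scales m (S / (2 * m * R))) := ⟨{
  A k := 2 * m * R * stageUnit m R k
  B := cubeExponent m R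
  T k := (S + 1) * stageUnit m R k
  E k := ∑ j ∈ Finset.range k, 2 * ((S + 1) * stageUnit m R j)
  exponent_pos := by positivity
  exponent_le_one := div_two_mul_mul_le_one hSR
  E_zero := rfl
  E_succ k := by rw [Finset.sum_range_succ, two_mul, ← add_assoc]
  le_E k := by
    calc k = ∑ j ∈ Finset.range k, 1 := by simp
      _ ≤ _ := Finset.sum_le_sum fun j _ => by unfold stageUnit; nlinarith
  cell_le k := by unfold stageUnit; nlinarith
  gap k := by rw [cubeExponent, stageUnit]; omega
  mul_A_le k := by
    calc (S / (2 * m * R) : ℝ) * ↑(2 * m * R * stageUnit m R k)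
        = ↑(S * stageUnit m R k) := by push_cast; field_simp
      _ ≤ _ := mod_cast Nat.le_add_left_of_le (by gcongr; omega)
  mul_B_le k := div_mul_cubeExponent_le (by omega) hR hSR k
  expected_points k := by
    have hmk : 2 * (k + 2) ≤ m * (k + 2) := by gcongr
    have hmR := congrArg (2 * m * stageUnit m R k * ·) hSR
    rw [cubeExponent]
    unfold stageUnit at *
    nlinarith }⟩

end ScalesExist

lemma exists_scales {m : ℕ} (hm : 2 ≤ m) {ε : ℝ} (hε : 0 < ε) :
    ∃ θ : ℝ, ((m : ℝ) - 1) / 2 - ε ≤ m * θ ∧ Nonempty (Scales m θ) := by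
  obtain ⟨N, hN⟩ := exists_nat_ge ε⁻¹
  obtain ⟨S, hS⟩ : ∃ S, S + 1 + 2 + (N + 3) = m * (N + 3) := by
    obtain ⟨l, rfl⟩ := Nat.exists_eq_add_of_le' hm
    exact ⟨l * (N + 3) + N, by ring⟩
  refine ⟨_, ?_, nonempty_scales hm (Nat.succ_pos (N + 2)) S.succ_pos hS⟩
  have hSreal : (S : ℝ) + 1 + 2 + (N + 3) = m * (N + 3) := mod_cast hS
  have hNε : 1 ≤ ε * N := (inv_le_iff_one_le_mul₀' hε).mp hN
  have : (0 : ℝ) < m := mod_cast (by omega : 0 < m)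
  push_cast
  rw [show (m : ℝ) * ((S + 1) / (2 * m * (N + 2 + 1))) = (S + 1) / (2 * (N + 3)) by
      field_simp; ring,
    le_div_iff₀ (by positivity)]
  nlinarith

/-! ### Dyadic cubes -/

section Dyadic

variable {ι : Type*} {a b c : ℕ} {W W' : ι → ℕ} {u u' : ι → ℝ}

/-- The closed dyadic cube of side `2^(-b)` with lower corner `W / 2^b`. -/
def dyadicCube (b : ℕ) (W : ι → ℕ) : Set (ι → ℝ) :=
  Icc (fun i => W i / 2 ^ b) fun i => (W i + 1) / 2 ^ b

/-- The first `b` binary digits of each coordinate of `y`, as an integer. -/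
noncomputable def dyadicIndex (b : ℕ) (y : ι → ℝ) (i : ι) : ℕ := ⌊2 ^ b * y i⌋₊

lemma mem_dyadicCube :
    u ∈ dyadicCube b W ↔ ∀ i, (W i : ℝ) ≤ 2 ^ b * u i ∧ 2 ^ b * u i ≤ W i + 1 := by
  have h2 : (0 : ℝ) < 2 ^ b := by positivity
  simp only [dyadicCube, mem_Icc, Pi.le_def, div_le_iff₀' h2, le_div_iff₀' h2, forall_and]

lemma mem_dyadicCube_dyadicIndex (hu : ∀ i, 0 ≤ u i) (b : ℕ) :
    u ∈ dyadicCube b (dyadicIndex b u) :=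
  mem_dyadicCube.mpr fun i =>
    ⟨Nat.floor_le (mul_nonneg (by positivity) (hu i)), (Nat.lt_floor_add_one _).le⟩

lemma dyadicIndex_add_div (b c : ℕ) (u : ι → ℝ) (i : ι) :
    dyadicIndex (b + c) u i / 2 ^ c = dyadicIndex b u i := by
  have h := Nat.floor_div_natCast (2 ^ (b + c) * u i : ℝ) (2 ^ c)
  rw [dyadicIndex, dyadicIndex, ← h]
  congr 1
  push_cast
  field_simp
  ring

lemma dyadicIndex_eq_of_le {y y' : ι → ℝ} (hab : a ≤ b)
    (h : dyadicIndex b y = dyadicIndex b y') : dyadicIndex a y = dyadicIndex a y' := by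
  obtain ⟨c, rfl⟩ := Nat.exists_eq_add_of_le hab
  funext i
  rw [← dyadicIndex_add_div a c, h, dyadicIndex_add_div]

lemma dyadicCube_subset_dyadicCube (hab : a ≤ b) (h : ∀ i, W i / 2 ^ (b - a) = W' i) :
    dyadicCube b W ⊆ dyadicCube a W' := by
  intro u hu
  obtain ⟨c, rfl⟩ := Nat.exists_eq_add_of_le hab
  simp only [mem_dyadicCube, add_tsub_cancel_left] at hu h ⊢
  intro i
  obtain ⟨hlow, hhigh⟩ := hu i
  have hdiv : 2 ^ c * W' i ≤ W i := h i ▸ Nat.mul_div_le _ _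
  have hlt : W i + 1 ≤ 2 ^ c * (W' i + 1) := h i ▸ Nat.lt_mul_div_succ _ (by positivity)
  have hdivR : (2 : ℝ) ^ c * W' i ≤ W i := mod_cast hdiv
  have hltR : (W i : ℝ) + 1 ≤ 2 ^ c * (W' i + 1) := mod_cast hlt
  have h2 : (0 : ℝ) < 2 ^ c := by positivity
  rw [pow_add, mul_right_comm, mul_comm] at hlow hhigh
  exact ⟨le_of_mul_le_mul_left (hdivR.trans hlow) h2, le_of_mul_le_mul_left (hhigh.trans hltR) h2⟩

lemma abs_sub_sub_le_one (hu : u ∈ dyadicCube b W) (hu' : u' ∈ dyadicCube b W') (i : ι) :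
    |2 ^ b * (u i - u' i) - ((W i : ℝ) - W' i)| ≤ 1 := by
  have h := mem_dyadicCube.mp hu i
  have h' := mem_dyadicCube.mp hu' i
  rw [abs_le]
  constructor <;> linarith

lemma eq_of_forall_dyadicIndex_eq {y y' : ι → ℝ} (hy : ∀ i, 0 ≤ y i)
    (hy' : ∀ i, 0 ≤ y' i) (h : ∀ b, dyadicIndex b y = dyadicIndex b y') : y = y' := by
  funext i
  have hle : ∀ b : ℕ, |y i - y' i| ≤ (1 / 2) ^ b := fun b => by
    have hb := abs_sub_sub_le_one (mem_dyadicCube_dyadicIndex hy b)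
      (mem_dyadicCube_dyadicIndex hy' b) i
    rw [h b, sub_self, sub_zero, abs_mul, abs_of_pos (by positivity)] at hb
    rwa [one_div, inv_pow, ← one_div, le_div_iff₀' (by positivity)]
  have hzero : |y i - y' i| ≤ 0 := ge_of_tendsto'
    (tendsto_pow_atTop_nhds_zero_of_lt_one (by norm_num) (by norm_num)) hle
  exact sub_eq_zero.mp (abs_nonpos_iff.mp hzero)

end Dyadic

/-! ### The Cantor set -/

/-- The lattice points whose integer parts after division by `L` form the vector `W`. -/
def cellPts {m : ℕ} (L : ℕ) (W : Fin m → ℕ) : Finset (Fin m → ℕ) :=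
  Fintype.piFinset fun i => Finset.Ico (L * W i) (L * (W i + 1))

lemma card_cellPts {m : ℕ} (L : ℕ) (W : Fin m → ℕ) : #(cellPts L W) = L ^ m := by
  simp [cellPts, mul_add]

lemma mem_cellPts {m L : ℕ} (hL : 0 < L) {W n : Fin m → ℕ} :
    n ∈ cellPts L W ↔ ∀ i, n i / L = W i := by
  simp only [cellPts, Fintype.mem_piFinset, Finset.mem_Ico]
  refine forall_congr' fun i => ?_
  rw [Nat.div_eq_iff hL, mul_comm L, mul_comm L, add_one_mul]
  omega

section CantorSet

variable {m : ℕ} {θ : ℝ} (P : Scales m θ) (Good : ℕ → Set (Fin m → ℕ))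

/-- The lattice points in the stage-`k` cell of index `W`. -/
def Scales.cell (k : ℕ) (W : Fin m → ℕ) : Finset (Fin m → ℕ) :=
  cellPts (2 ^ (P.A k - (P.B k + P.T k))) W

/-- The cube of side `2^(-B (k + 1))` with lower corner at the lattice point `n / 2^(A k)`. -/
def Scales.latticeCube (k : ℕ) (n : Fin m → ℕ) : Set (Fin m → ℝ) :=
  dyadicCube (P.B (k + 1)) fun i => 2 ^ (P.B (k + 1) - P.A k) * n i

/-- The points of the unit cube which, at every stage `k`, lie in the cube at some good lattice
point. -/
def trapSet : Set (Fin m → ℝ) :=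
  {u | ∀ k, ∃ n ∈ Good k, (∀ i, n i < 2 ^ P.A k) ∧ u ∈ P.latticeCube k n}

open scoped Classical in
/-- Every cell contains enough good lattice points to encode `T k` binary digits per
coordinate. -/
def Rich : Prop :=
  ∀ k W, (∀ i, W i < 2 ^ (P.B k + P.T k)) → (2 ^ P.T k) ^ m ≤ #{n ∈ P.cell k W | n ∈ Good k}

/-- An injective choice of a good lattice point for each string of digits, in every cell. -/
structure Labeling where
  pt : ∀ k, (Fin m → ℕ) → (Fin m → Fin (2 ^ P.T k)) → Fin m → ℕ
  pt_mem_good : ∀ {k W}, (∀ i, W i < 2 ^ (P.B k + P.T k)) → ∀ l, pt k W l ∈ Good k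
  pt_mem_cell : ∀ {k W}, (∀ i, W i < 2 ^ (P.B k + P.T k)) → ∀ l, pt k W l ∈ P.cell k W
  pt_injective : ∀ {k W}, (∀ i, W i < 2 ^ (P.B k + P.T k)) → (pt k W).Injective

variable {P Good}

lemma Scales.mem_cell {k : ℕ} {W n : Fin m → ℕ} :
    n ∈ P.cell k W ↔ ∀ i, n i / 2 ^ (P.A k - (P.B k + P.T k)) = W i :=
  mem_cellPts (by positivity)

lemma Scales.A_lt_B_succ (k : ℕ) : P.A k < P.B (k + 1) := by
  have := P.gap k
  omega

lemma Scales.lt_of_mem_cell {k : ℕ} {W n : Fin m → ℕ} (hn : n ∈ P.cell k W)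
    (hW : ∀ i, W i < 2 ^ (P.B k + P.T k)) (i : Fin m) : n i < 2 ^ P.A k := by
  have h := hW i
  rwa [← Scales.mem_cell.mp hn i, Nat.div_lt_iff_lt_mul (by positivity), ← pow_add,
    Nat.add_sub_cancel' (P.cell_le k)] at h

lemma Scales.latticeCube_subset_dyadicCube (k : ℕ) (n : Fin m → ℕ) :
    P.latticeCube k n ⊆ dyadicCube (P.A k) n :=
  dyadicCube_subset_dyadicCube (P.A_lt_B_succ k).le fun _ =>
    Nat.mul_div_cancel_left _ (by positivity)

lemma Scales.latticeCube_subset_cell {k : ℕ} {W n : Fin m → ℕ} (hn : n ∈ P.cell k W) :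
    P.latticeCube k n ⊆ dyadicCube (P.B k + P.T k) W :=
  (P.latticeCube_subset_dyadicCube k n).trans
    (dyadicCube_subset_dyadicCube (P.cell_le k) (Scales.mem_cell.mp hn))

lemma Scales.one_le_two_pow_mul_dist {k : ℕ} {n n' : Fin m → ℕ} {u u' : Fin m → ℝ} (hn : n ≠ n')
    (hu : u ∈ P.latticeCube k n) (hu' : u' ∈ P.latticeCube k n') :
    1 ≤ 2 ^ (P.A k + 1) * dist u u' := by
  obtain ⟨i, hi⟩ := Function.ne_iff.mp hn
  obtain ⟨c, hc⟩ := Nat.exists_eq_add_of_lt (P.A_lt_B_succ k)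
  have hsep : (1 : ℝ) ≤ |(n i : ℝ) - n' i| := by
    exact_mod_cast Int.one_le_abs (sub_ne_zero.mpr (Nat.cast_injective.ne hi))
  have hnear : |2 ^ P.A k * (u i - u' i) - (n i - n' i)| ≤ 1 / 2 := by
    have hclose := abs_sub_sub_le_one hu hu' i
    have hexp : P.B (k + 1) - P.A k = c + 1 := by omega
    have h2 : (2 : ℝ) ≤ 2 ^ (c + 1) := le_self_pow₀ one_le_two c.succ_ne_zero
    rw [hexp, show P.B (k + 1) = c + 1 + P.A k by omega] at hclose
    push_cast at hclose
    rw [pow_add 2 (c + 1), mul_assoc, ← mul_sub, ← mul_sub, abs_mul, abs_of_pos (by positivity)]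
      at hclose
    rw [le_div_iff₀' two_pos]
    exact (mul_le_mul_of_nonneg_right h2 (abs_nonneg _)).trans hclose
  have hdist : |2 ^ P.A k * (u i - u' i)| ≤ 2 ^ P.A k * dist u u' := by
    rw [abs_mul, abs_of_pos (by positivity)]
    gcongr
    exact dist_le_pi_dist u u' i
  have htri := abs_sub_abs_le_abs_sub ((n i : ℝ) - n' i) (2 ^ P.A k * (u i - u' i))
  rw [abs_sub_comm] at hnear
  rw [pow_succ]
  linarith

lemma trapSet_subset_Icc : trapSet P Good ⊆ Icc 0 1 := by
  intro u hu
  obtain ⟨n, -, hn, hun⟩ := hu 0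
  have hu := mem_dyadicCube.mp (P.latticeCube_subset_dyadicCube 0 n hun)
  have h2 : (0 : ℝ) < 2 ^ P.A 0 := by positivity
  refine ⟨fun i => nonneg_of_mul_nonneg_right ((n i).cast_nonneg.trans (hu i).1) h2, fun i => ?_⟩
  have hni : (n i : ℝ) + 1 ≤ 2 ^ P.A 0 := mod_cast hn i
  exact le_of_mul_le_mul_left (by simpa using (hu i).2.trans hni) h2

lemma isCompact_trapSet : IsCompact (trapSet P Good) := by
  refine isCompact_Icc.of_isClosed_subset ?_ trapSet_subset_Icc
  have hfin : ∀ k, {n : Fin m → ℕ | n ∈ Good k ∧ ∀ i, n i < 2 ^ P.A k}.Finite := fun k =>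
    (finite_Iic fun _ => 2 ^ P.A k).subset fun n hn i => (hn.2 i).le
  have heq : trapSet P Good
      = ⋂ k, ⋃ n ∈ {n : Fin m → ℕ | n ∈ Good k ∧ ∀ i, n i < 2 ^ P.A k}, P.latticeCube k n := by
    ext u
    simp [trapSet, and_assoc]
  rw [heq]
  exact isClosed_iInter fun k => (hfin k).isClosed_biUnion fun _ _ => isClosed_Icc

lemma Rich.nonempty_labeling (h : Rich P Good) : Nonempty (Labeling P Good) := by
  classical
  have hemb : ∀ k (W : Fin m → ℕ), ∃ f : (Fin m → Fin (2 ^ P.T k)) → Fin m → ℕ,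
      (∀ i, W i < 2 ^ (P.B k + P.T k)) →
        (∀ l, f l ∈ {n ∈ P.cell k W | n ∈ Good k}) ∧ f.Injective := by
    intro k W
    by_cases hW : ∀ i, W i < 2 ^ (P.B k + P.T k)
    · obtain ⟨f⟩ := Function.Embedding.nonempty_of_card_le
        (α := Fin m → Fin (2 ^ P.T k)) (β := {n ∈ P.cell k W | n ∈ Good k})
        (by simpa only [Fintype.card_pi_const, Fintype.card_fin, Fintype.card_coe] using h k W hW)
      exact ⟨fun l => f l, fun _ => ⟨fun l => (f l).2, Subtype.val_injective.comp f.injective⟩⟩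
    · exact ⟨0, fun hW' => absurd hW' hW⟩
  choose f hf using hemb
  exact ⟨⟨f, fun hW l => (Finset.mem_filter.mp ((hf _ _ hW).1 l)).2,
    fun hW l => (Finset.mem_filter.mp ((hf _ _ hW).1 l)).1, fun hW => (hf _ _ hW).2⟩⟩

end CantorSet

/-! ### Coding the unit cube by the Cantor set -/

lemma rpow_two_pow_le_two_pow {θ : ℝ} {b e : ℕ} (h : θ * b ≤ e) : ((2 : ℝ) ^ b) ^ θ ≤ 2 ^ e := by
  rw [← Real.rpow_natCast, ← Real.rpow_mul zero_le_two, ← Real.rpow_natCast, mul_comm]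
  exact Real.rpow_le_rpow_of_exponent_le one_le_two h

section Coding

variable {m : ℕ} {θ : ℝ} {P : Scales m θ} {Good : ℕ → Set (Fin m → ℕ)}

/-- The cell selected inside the stage-`k` cube of index `Q` by `T k` digits of `y`. -/
noncomputable def Scales.subcell (P : Scales m θ) (k : ℕ) (Q : Fin m → ℕ) (y : Fin m → ℝ)
    (i : Fin m) : ℕ :=
  2 ^ P.T k * Q i + dyadicIndex (P.E k + P.T k) y i % 2 ^ P.T k

/-- The `T k` digits of `y` that select a lattice point inside a stage-`k` cell. -/
noncomputable def Scales.label (P : Scales m θ) (k : ℕ) (y : Fin m → ℝ) (i : Fin m) :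
    Fin (2 ^ P.T k) :=
  Fin.ofNat _ (dyadicIndex (P.E (k + 1)) y i)

lemma Scales.subcell_div (k : ℕ) (Q : Fin m → ℕ) (y : Fin m → ℝ) (i : Fin m) :
    P.subcell k Q y i / 2 ^ P.T k = Q i := by
  rw [Scales.subcell, Nat.mul_add_div (by positivity), Nat.mod_div_self, add_zero]

lemma Scales.subcell_lt {k : ℕ} {Q : Fin m → ℕ} (hQ : ∀ i, Q i < 2 ^ P.B k) (y : Fin m → ℝ)
    (i : Fin m) : P.subcell k Q y i < 2 ^ (P.B k + P.T k) := by
  rw [pow_add, ← Nat.div_lt_iff_lt_mul (by positivity), Scales.subcell_div]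
  exact hQ i

lemma Scales.dyadicIndex_eq_add_subcell (k : ℕ) (Q : Fin m → ℕ) (y : Fin m → ℝ) (i : Fin m) :
    dyadicIndex (P.E k + P.T k) y i + 2 ^ P.T k * Q i
      = P.subcell k Q y i + 2 ^ P.T k * dyadicIndex (P.E k) y i := by
  rw [Scales.subcell, ← dyadicIndex_add_div (P.E k) (P.T k) y i]
  have := Nat.div_add_mod (dyadicIndex (P.E k + P.T k) y i) (2 ^ P.T k)
  omega

lemma Scales.dyadicIndex_eq_of_label_eq {k : ℕ} {y y' : Fin m → ℝ}
    (h : dyadicIndex (P.E k + P.T k) y = dyadicIndex (P.E k + P.T k) y')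
    (hlabel : P.label k y = P.label k y') :
    dyadicIndex (P.E (k + 1)) y = dyadicIndex (P.E (k + 1)) y' := by
  funext i
  have hmod : dyadicIndex (P.E (k + 1)) y i % 2 ^ P.T k
      = dyadicIndex (P.E (k + 1)) y' i % 2 ^ P.T k := congrArg Fin.val (congrFun hlabel i)
  have hdiv := congrFun h i
  rw [← dyadicIndex_add_div _ (P.T k) y, ← dyadicIndex_add_div _ (P.T k) y', ← P.E_succ] at hdiv
  rw [← Nat.div_add_mod (dyadicIndex (P.E (k + 1)) y i) (2 ^ P.T k), hdiv, hmod,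
    Nat.div_add_mod]

namespace Labeling

variable (S : Labeling P Good) {y y' : Fin m → ℝ} {k : ℕ}

/-- The index of the stage-`k` cube of side `2^(-B k)` on the branch of `y`. -/
noncomputable def corner (y : Fin m → ℝ) : ℕ → Fin m → ℕ
  | 0 => 0
  | k + 1 => fun i =>
    2 ^ (P.B (k + 1) - P.A k) * S.pt k (P.subcell k (corner y k) y) (P.label k y) i

/-- The good lattice point selected at stage `k` on the branch of `y`. -/
noncomputable def latticePt (y : Fin m → ℝ) (k : ℕ) : Fin m → ℕ :=
  S.pt k (P.subcell k (S.corner y k) y) (P.label k y)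

lemma corner_lt (y : Fin m → ℝ) (k : ℕ) (i : Fin m) : S.corner y k i < 2 ^ P.B k := by
  induction k generalizing i with
  | zero => simp [corner]
  | succ k ih =>
    have hW := P.subcell_lt ih y
    have hlt : S.latticePt y k i < 2 ^ P.A k := P.lt_of_mem_cell (S.pt_mem_cell hW _) hW i
    calc S.corner y (k + 1) i = 2 ^ (P.B (k + 1) - P.A k) * S.latticePt y k i := rfl
      _ < 2 ^ (P.B (k + 1) - P.A k) * 2 ^ P.A k := by gcongr
      _ = 2 ^ P.B (k + 1) := by rw [← pow_add, Nat.sub_add_cancel (P.A_lt_B_succ k).le]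

lemma subcell_corner_lt (y : Fin m → ℝ) (k : ℕ) :
    ∀ i, P.subcell k (S.corner y k) y i < 2 ^ (P.B k + P.T k) :=
  P.subcell_lt (S.corner_lt y k) y

lemma latticePt_mem_cell (y : Fin m → ℝ) (k : ℕ) :
    S.latticePt y k ∈ P.cell k (P.subcell k (S.corner y k) y) :=
  S.pt_mem_cell (S.subcell_corner_lt y k) _

lemma latticeCube_subset_dyadicCube_corner (y : Fin m → ℝ) (k : ℕ) :
    P.latticeCube k (S.latticePt y k) ⊆ dyadicCube (P.B k) (S.corner y k) :=
  (P.latticeCube_subset_cell (S.latticePt_mem_cell y k)).trans <|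
    dyadicCube_subset_dyadicCube (Nat.le_add_right _ _) fun i => by
      rw [Nat.add_sub_cancel_left, P.subcell_div]

lemma exists_forall_mem_latticeCube (y : Fin m → ℝ) :
    ∃ u, ∀ k, u ∈ P.latticeCube k (S.latticePt y k) := by
  obtain ⟨u, hu⟩ := IsCompact.nonempty_iInter_of_sequence_nonempty_isCompact_isClosed
    (fun k => P.latticeCube k (S.latticePt y k))
    (fun k => S.latticeCube_subset_dyadicCube_corner y (k + 1))
    (fun k => nonempty_Icc.mpr fun i => by gcongr; simp) isCompact_Icc fun _ => isClosed_Icc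
  exact ⟨u, mem_iInter.mp hu⟩

/-- A point of the Cantor set lying on the branch of `y`. -/
noncomputable def codedPt (y : Fin m → ℝ) : Fin m → ℝ :=
  (S.exists_forall_mem_latticeCube y).choose

lemma codedPt_mem_latticeCube (y : Fin m → ℝ) (k : ℕ) :
    S.codedPt y ∈ P.latticeCube k (S.latticePt y k) :=
  (S.exists_forall_mem_latticeCube y).choose_spec k

lemma codedPt_mem_trapSet (y : Fin m → ℝ) : S.codedPt y ∈ trapSet P Good := fun k =>
  ⟨S.latticePt y k, S.pt_mem_good (S.subcell_corner_lt y k) _,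
    P.lt_of_mem_cell (S.latticePt_mem_cell y k) (S.subcell_corner_lt y k),
    S.codedPt_mem_latticeCube y k⟩

lemma corner_eq_of_dyadicIndex_eq (h : dyadicIndex (P.E k) y = dyadicIndex (P.E k) y') :
    S.corner y k = S.corner y' k := by
  induction k with
  | zero => rfl
  | succ k ih =>
    have hcell := dyadicIndex_eq_of_le (P.E_succ k ▸ Nat.le_add_right _ _) h
    have hcorner := ih (dyadicIndex_eq_of_le (Nat.le_add_right _ (P.T k)) hcell)
    have hsubcell : P.subcell k (S.corner y k) y = P.subcell k (S.corner y' k) y' :=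
      funext fun i => by rw [Scales.subcell, Scales.subcell, hcorner, hcell]
    have hlabel : P.label k y = P.label k y' := funext fun i => by
      rw [Scales.label, Scales.label, h]
    rw [corner, corner, hsubcell, hlabel]

lemma dyadicIndex_eq_of_latticePt_eq (h : dyadicIndex (P.E k) y = dyadicIndex (P.E k) y')
    (hpt : S.latticePt y k = S.latticePt y' k) :
    dyadicIndex (P.E (k + 1)) y = dyadicIndex (P.E (k + 1)) y' := by
  have hcorner := S.corner_eq_of_dyadicIndex_eq h
  have hcell : P.subcell k (S.corner y k) y = P.subcell k (S.corner y' k) y' := funext fun i => by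
    rw [← Scales.mem_cell.mp (S.latticePt_mem_cell y k) i, hpt,
      Scales.mem_cell.mp (S.latticePt_mem_cell y' k) i]
  have hindex : dyadicIndex (P.E k + P.T k) y = dyadicIndex (P.E k + P.T k) y' :=
    funext fun i => by
      have e := P.dyadicIndex_eq_add_subcell k (S.corner y k) y i
      have e' := P.dyadicIndex_eq_add_subcell k (S.corner y' k) y' i
      rw [hcell, hcorner, h] at e
      omega
  rw [latticePt, latticePt, ← hcell] at hpt
  exact P.dyadicIndex_eq_of_label_eq hindex (S.pt_injective (S.subcell_corner_lt y k) hpt)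

lemma exists_latticePt_ne (hy : y ∈ univ.pi fun _ => Ico 0 1)
    (hy' : y' ∈ univ.pi fun _ => Ico 0 1) (hne : y ≠ y') :
    ∃ k, dyadicIndex (P.E k) y = dyadicIndex (P.E k) y' ∧
      S.latticePt y k ≠ S.latticePt y' k := by
  have hex : ∃ k, dyadicIndex (P.E k) y ≠ dyadicIndex (P.E k) y' := by
    by_contra! h
    exact hne <| eq_of_forall_dyadicIndex_eq (fun i => (hy i trivial).1)
      (fun i => (hy' i trivial).1) fun b => dyadicIndex_eq_of_le (P.le_E b) (h b)
  classical
  have hfind := Nat.find_spec hex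
  cases hk : Nat.find hex with
  | zero =>
    refine absurd (funext fun i => ?_) hfind
    have hfloor : ∀ {x : ℝ}, x ∈ Ico (0 : ℝ) 1 → ⌊x⌋₊ = 0 := fun hx => Nat.floor_eq_zero.mpr hx.2
    simp [hk, P.E_zero, dyadicIndex, hfloor (hy i trivial), hfloor (hy' i trivial)]
  | succ k =>
    rw [hk] at hfind
    have hmin := not_not.mp (Nat.find_min hex (by omega : k < Nat.find hex))
    exact ⟨k, hmin, fun hpt => hfind (S.dyadicIndex_eq_of_latticePt_eq hmin hpt)⟩

lemma mul_dist_codedPt_le_one (h : dyadicIndex (P.E k) y = dyadicIndex (P.E k) y') :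
    2 ^ P.B k * dist (S.codedPt y) (S.codedPt y') ≤ 1 := by
  rw [← le_div_iff₀' (by positivity), dist_pi_le_iff (by positivity)]
  intro i
  have hQ := S.latticeCube_subset_dyadicCube_corner y k (S.codedPt_mem_latticeCube y k)
  have hQ' := S.latticeCube_subset_dyadicCube_corner y' k (S.codedPt_mem_latticeCube y' k)
  have hi := abs_sub_sub_le_one hQ hQ' i
  rw [S.corner_eq_of_dyadicIndex_eq h, sub_self, sub_zero, abs_mul,
    abs_of_pos (by positivity)] at hi
  rwa [le_div_iff₀' (by positivity)]

lemma mul_dist_le (hy : ∀ i, 0 ≤ y i) (hy' : ∀ i, 0 ≤ y' i)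
    (h : dyadicIndex (P.E k) y = dyadicIndex (P.E k) y') :
    2 ^ (P.E k + P.T k) * dist y y'
      ≤ 2 ^ (P.B k + P.T k) * dist (S.codedPt y) (S.codedPt y') + 2 := by
  rw [← le_div_iff₀' (by positivity), dist_pi_le_iff (by positivity)]
  intro i
  have hindex := abs_sub_sub_le_one (mem_dyadicCube_dyadicIndex hy (P.E k + P.T k))
      (mem_dyadicCube_dyadicIndex hy' (P.E k + P.T k)) i
  have hcell := abs_sub_sub_le_one
    (P.latticeCube_subset_cell (S.latticePt_mem_cell y k) (S.codedPt_mem_latticeCube y k))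
    (P.latticeCube_subset_cell (S.latticePt_mem_cell y' k) (S.codedPt_mem_latticeCube y' k)) i
  have hsub : (dyadicIndex (P.E k + P.T k) y i : ℝ) - dyadicIndex (P.E k + P.T k) y' i
      = P.subcell k (S.corner y k) y i - P.subcell k (S.corner y' k) y' i := by
    have e := P.dyadicIndex_eq_add_subcell k (S.corner y k) y i
    have e' := P.dyadicIndex_eq_add_subcell k (S.corner y' k) y' i
    rw [h, S.corner_eq_of_dyadicIndex_eq h] at e
    rw [S.corner_eq_of_dyadicIndex_eq h, sub_eq_sub_iff_add_eq_add]
    norm_cast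
    omega
  have hdist : |2 ^ (P.B k + P.T k) * (S.codedPt y i - S.codedPt y' i)|
      ≤ 2 ^ (P.B k + P.T k) * dist (S.codedPt y) (S.codedPt y') := by
    rw [abs_mul, abs_of_pos (by positivity)]
    gcongr
    exact dist_le_pi_dist (S.codedPt y) (S.codedPt y') i
  have h2 : (0 : ℝ) < 2 ^ (P.E k + P.T k) := by positivity
  rw [le_div_iff₀' h2, Real.dist_eq, ← abs_of_pos h2, ← abs_mul]
  rw [hsub] at hindex
  rw [abs_le] at hindex hcell hdist ⊢
  constructor <;> linarith

lemma dist_le_mul_dist_codedPt_rpow (hy : y ∈ univ.pi fun _ => Ico 0 1)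
    (hy' : y' ∈ univ.pi fun _ => Ico 0 1) :
    dist y y' ≤ 5 * dist (S.codedPt y) (S.codedPt y') ^ θ := by
  have hθ := P.exponent_pos
  obtain rfl | hne := eq_or_ne y y'
  · rw [dist_self]; positivity
  obtain ⟨k, hindex, hpt⟩ := S.exists_latticePt_ne hy hy' hne
  set z := dist (S.codedPt y) (S.codedPt y')
  have hz0 : 0 ≤ z := dist_nonneg
  have hcube : 2 ^ P.B k * z ≤ 2 ^ P.E k * z ^ θ :=
    calc 2 ^ P.B k * z ≤ (2 ^ P.B k * z) ^ θ :=
          Real.self_le_rpow_of_le_one (by positivity) (S.mul_dist_codedPt_le_one hindex)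
            P.exponent_le_one
      _ = (2 ^ P.B k) ^ θ * z ^ θ := Real.mul_rpow (by positivity) hz0
      _ ≤ 2 ^ P.E k * z ^ θ := by gcongr; exact rpow_two_pow_le_two_pow (P.mul_B_le k)
  have hlattice : 1 ≤ 2 * 2 ^ (P.E k + P.T k) * z ^ θ :=
    calc (1 : ℝ) ≤ (2 ^ (P.A k + 1) * z) ^ θ :=
          Real.one_le_rpow (P.one_le_two_pow_mul_dist hpt (S.codedPt_mem_latticeCube y k)
            (S.codedPt_mem_latticeCube y' k)) hθ.le
      _ = (2 ^ (P.A k + 1)) ^ θ * z ^ θ := Real.mul_rpow (by positivity) hz0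
      _ ≤ 2 ^ (P.E k + P.T k + 1) * z ^ θ := by
          gcongr
          refine rpow_two_pow_le_two_pow ?_
          push_cast
          linarith [P.mul_A_le k, P.exponent_le_one]
      _ = 2 * 2 ^ (P.E k + P.T k) * z ^ θ := by ring
  have h2 : (0 : ℝ) < 2 ^ (P.E k + P.T k) := by positivity
  refine le_of_mul_le_mul_left ?_ h2
  calc 2 ^ (P.E k + P.T k) * dist y y' ≤ 2 ^ (P.B k + P.T k) * z + 2 :=
        S.mul_dist_le (fun i => (hy i trivial).1) (fun i => (hy' i trivial).1) hindex
    _ = 2 ^ P.T k * (2 ^ P.B k * z) + 2 * 1 := by ring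
    _ ≤ 2 ^ P.T k * (2 ^ P.E k * z ^ θ) + 2 * (2 * 2 ^ (P.E k + P.T k) * z ^ θ) := by gcongr
    _ = 2 ^ (P.E k + P.T k) * (5 * z ^ θ) := by ring

end Labeling

end Coding

lemma ofReal_mul_dimH_le_dimH_image {α β : Type*} [MetricSpace α] [MetricSpace β] {f : α → β}
    {s : Set α} {C : ℝ≥0} {θ : ℝ} (hθ : 0 < θ)
    (h : ∀ x ∈ s, ∀ x' ∈ s, dist x x' ≤ C * dist (f x) (f x') ^ θ) :
    ENNReal.ofReal θ * dimH s ≤ dimH (f '' s) := by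
  obtain rfl | ⟨x₀, -⟩ := s.eq_empty_or_nonempty
  · simp
  have : Nonempty α := ⟨x₀⟩
  have hinj : InjOn f s := fun x hx x' hx' hxx' => by
    simpa [hxx', Real.zero_rpow hθ.ne'] using h x hx x' hx'
  have hleft := hinj.leftInvOn_invFunOn
  have hholder : HolderOnWith C θ.toNNReal (Function.invFunOn f s) (f '' s) := by
    rintro _ ⟨x, hx, rfl⟩ _ ⟨x', hx', rfl⟩
    rw [hleft hx, hleft hx', edist_dist, edist_dist, Real.coe_toNNReal θ hθ.le,
      ENNReal.ofReal_rpow_of_nonneg dist_nonneg hθ.le, ← ENNReal.ofReal_coe_nnreal,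
      ← ENNReal.ofReal_mul C.coe_nonneg]
    exact ENNReal.ofReal_le_ofReal (h x hx x' hx')
  have hdim := hholder.dimH_image_le (Real.toNNReal_pos.mpr hθ)
  rw [hleft.image_image] at hdim
  rw [mul_comm]
  exact ENNReal.mul_le_of_le_div hdim

lemma dimH_univ_pi_Ico_s18 (m : ℕ) : dimH (univ.pi fun _ : Fin m => Ico (0 : ℝ) 1) = m := by
  rw [Real.dimH_of_mem_nhds (x := fun _ => 1 / 2), Module.finrank_fin_fun]
  exact set_pi_mem_nhds finite_univ fun _ _ => Ico_mem_nhds (by norm_num) (by norm_num)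

lemma Rich.le_dimH_trapSet {m : ℕ} {θ : ℝ} {P : Scales m θ} {Good : ℕ → Set (Fin m → ℕ)}
    (h : Rich P Good) : ENNReal.ofReal (m * θ) ≤ dimH (trapSet P Good) := by
  obtain ⟨S⟩ := h.nonempty_labeling
  calc ENNReal.ofReal (m * θ)
      = ENNReal.ofReal θ * dimH (univ.pi fun _ : Fin m => Ico (0 : ℝ) 1) := by
        rw [dimH_univ_pi_Ico_s18, mul_comm, ENNReal.ofReal_mul P.exponent_pos.le,
          ENNReal.ofReal_natCast]
    _ ≤ dimH (S.codedPt '' univ.pi fun _ => Ico 0 1) :=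
        ofReal_mul_dimH_le_dimH_image (C := 5) P.exponent_pos
          fun y hy y' hy' => S.dist_le_mul_dist_codedPt_rpow hy hy'
    _ ≤ dimH (trapSet P Good) := dimH_mono (image_subset_iff.mpr fun y _ => S.codedPt_mem_trapSet y)

/-! ### Random translates -/

lemma measureReal_closedBall_unitAddCircle (x : UnitAddCircle) {δ : ℝ} (hδ : 0 ≤ δ) (hδ1 : δ ≤ 1) :
    volume.real (Metric.closedBall x (δ / 2)) = δ := by
  rw [measureReal_def, AddCircle.volume_closedBall, mul_div_cancel₀ δ two_ne_zero,
    min_eq_right hδ1, ENNReal.toReal_ofReal hδ]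

section RandomTranslates

variable {m : ℕ} {θ : ℝ} (P : Scales m θ)

/-- The lattice points at which the height of the translated paraboloid is within
`2^(-B (k + 1)) / 2` of the lattice `2^(-A k) ℤ`. -/
def goodPts (a : Fin (m + 1) → ℝ) (k : ℕ) : Set (Fin m → ℕ) :=
  {n | phase (2 ^ P.A k) n a ∈ Metric.closedBall 0 (1 / 2 ^ (P.B (k + 1) - P.A k) / 2)}

open scoped Classical in
/-- The translates for which the stage-`k` cell of index `W` has too few good lattice points. -/
def sparseTranslates (k : ℕ) (W : Fin m → ℕ) : Set (Fin (m + 1) → ℝ) :=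
  {a | #{n ∈ P.cell k W | n ∈ goodPts P a k} < (2 ^ P.T k) ^ m}

lemma Scales.two_pow_le_card_cell_mul (k : ℕ) (W : Fin m → ℕ) :
    2 ^ (m * (P.B k + P.T k) + (k + 2) + 2)
      ≤ #(P.cell k W) * (1 / 2 ^ (P.B (k + 1) - P.A k) : ℝ) := by
  obtain ⟨c, hc⟩ := Nat.exists_eq_add_of_le (P.cell_le k)
  obtain ⟨D, hD⟩ := Nat.exists_eq_add_of_le (P.A_lt_B_succ k).le
  have hexp : m * (P.B k + P.T k) + (k + 2) + 2 + D ≤ m * c := by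
    have := P.expected_points k
    rw [hD, add_one_mul, hc, mul_add] at this
    linarith
  rw [Scales.cell, card_cellPts, mul_one_div, le_div_iff₀ (by positivity), hD, hc,
    Nat.add_sub_cancel_left, Nat.add_sub_cancel_left]
  push_cast
  rw [← pow_add, ← pow_mul, mul_comm c]
  exact pow_le_pow_right₀ one_le_two hexp

lemma measureReal_sparseTranslates_le (k : ℕ) (W : Fin m → ℕ) :
    (unitCubeMeasure (Fin (m + 1))).real (sparseTranslates P k W)
      ≤ 1 / 2 ^ (m * (P.B k + P.T k) + (k + 2)) := by
  classical
  set δ : ℝ := 1 / 2 ^ (P.B (k + 1) - P.A k)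
  have hδ0 : 0 < δ := by positivity
  have hδ1 : δ ≤ 1 := div_le_one_of_le₀ (one_le_pow₀ one_le_two) (by positivity)
  have hprob : ∀ n, (unitCubeMeasure (Fin (m + 1))).real
      (phase (2 ^ P.A k) n ⁻¹' Metric.closedBall 0 (δ / 2)) = δ := fun n => by
    rw [(measurePreserving_phase (by positivity)).measureReal_preimage
      measurableSet_closedBall.nullMeasurableSet, measureReal_closedBall_unitAddCircle _ hδ0.le hδ1]
  have hcheb := measureReal_card_filter_le (s := P.cell k W)
    (Finset.card_pos.mp (by rw [Scales.cell, card_cellPts]; positivity))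
    (fun n => measurable_phase) (fun n _ n' _ => indepFun_phase (by positivity))
    measurableSet_closedBall hδ0 fun n _ => hprob n
  have hmean : 4 * 2 ^ (m * (P.B k + P.T k) + (k + 2)) ≤ #(P.cell k W) * δ := by
    refine le_of_eq_of_le ?_ (P.two_pow_le_card_cell_mul k W)
    ring
  have htarget : ((2 ^ P.T k) ^ m : ℝ) ≤ #(P.cell k W) * δ / 2 := by
    have : (2 : ℝ) ^ (m * P.T k) ≤ 2 ^ (m * (P.B k + P.T k) + (k + 2)) :=
      pow_le_pow_right₀ one_le_two (by rw [mul_add]; omega)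
    have hpos : (0 : ℝ) < 2 ^ (m * (P.B k + P.T k) + (k + 2)) := by positivity
    rw [← pow_mul, mul_comm]
    linarith
  refine (measureReal_mono fun a ha => ?_).trans (hcheb.trans ?_)
  · have : (#{n ∈ P.cell k W | n ∈ goodPts P a k} : ℝ) < (2 ^ P.T k) ^ m := mod_cast ha
    exact (this.trans_le htarget).le
  · rw [div_le_div_iff₀ (hmean.trans_lt' (by positivity)) (by positivity), one_mul]
    exact hmean

lemma unitCubeMeasure_iUnion_sparseTranslates_le (k : ℕ) :
    unitCubeMeasure (Fin (m + 1))
        (⋃ W ∈ Fintype.piFinset fun _ => Finset.range (2 ^ (P.B k + P.T k)),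
          sparseTranslates P k W)
      ≤ ENNReal.ofReal (1 / 2 / 2 / 2 ^ k) := by
  rw [← ofReal_measureReal (measure_ne_top _ _)]
  refine ENNReal.ofReal_le_ofReal <| (measureReal_biUnion_finset_le _ _).trans <|
    (Finset.sum_le_sum fun W _ => measureReal_sparseTranslates_le P k W).trans_eq ?_
  rw [Finset.sum_const, Fintype.card_piFinset_const, Finset.card_range, nsmul_eq_mul,
    pow_add 2 (m * _), pow_mul']
  push_cast
  field_simp
  ring

lemma unitCubeMeasure_not_rich_goodPts_le :
    unitCubeMeasure (Fin (m + 1)) {a | ¬Rich P (goodPts P a)} ≤ ENNReal.ofReal (1 / 2) := by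
  have hsum := hasSum_geometric_two' (1 / 2)
  have hcover : {a | ¬Rich P (goodPts P a)} ⊆
      ⋃ k, ⋃ W ∈ Fintype.piFinset fun _ => Finset.range (2 ^ (P.B k + P.T k)),
        sparseTranslates P k W := fun a ha => by
    simpa [Rich, sparseTranslates] using ha
  rw [← hsum.tsum_eq, ENNReal.ofReal_tsum_of_nonneg (fun k => by positivity) hsum.summable]
  exact (measure_mono hcover).trans <| (measure_iUnion_le _).trans <|
    ENNReal.tsum_le_tsum (unitCubeMeasure_iUnion_sparseTranslates_le P)

lemma volume_rich_goodPts_pos :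
    0 < volume ({a | Rich P (goodPts P a)} ∩ univ.pi fun _ => Ioc 0 1) := by
  rw [← Measure.restrict_apply' (MeasurableSet.univ_pi fun _ => measurableSet_Ioc),
    ← unitCubeMeasure_eq_restrict, pos_iff_ne_zero]
  intro hzero
  have hone := measure_univ_le_add_compl (μ := unitCubeMeasure (Fin (m + 1)))
    {a | Rich P (goodPts P a)}
  rw [hzero, measure_univ, zero_add] at hone
  have hhalf := hone.trans (unitCubeMeasure_not_rich_goodPts_le P)
  rw [ENNReal.one_le_ofReal] at hhalf
  norm_num at hhalf

end RandomTranslates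

/-! ### Null dot product sets -/

lemma volume_eq_zero_of_norm_coe_mul_le {s : Set ℝ} {q : ℕ → ℤ} (hq : ∀ k, q k ≠ 0) {η : ℕ → ℝ}
    (hη : Tendsto η atTop (𝓝 0))
    (h : ∀ k, ∀ t ∈ s, ‖((q k * t : ℝ) : UnitAddCircle)‖ ≤ η k) : volume s = 0 := by
  have hunit : ∀ j : ℤ, volume.restrict (Ioc (j : ℝ) (j + 1)) s = 0 := fun j => by
    refine le_antisymm (ge_of_tendsto' (x := atTop) (f := fun k => ENNReal.ofReal (2 * η k)) ?_
      fun k => ?_) bot_le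
    · simpa using ENNReal.tendsto_ofReal (hη.const_mul 2)
    · have hpres := measurePreserving_coe_affine (hq k) j 0
      calc _ ≤ volume.restrict (Ioc (j : ℝ) (j + 1))
            ((fun t => ((q k * t + 0 : ℝ) : UnitAddCircle)) ⁻¹' Metric.closedBall 0 (η k)) :=
            measure_mono fun t ht => by simpa using h k t ht
        _ = ENNReal.ofReal (min 1 (2 * η k)) := by
            rw [hpres.measure_preimage measurableSet_closedBall.nullMeasurableSet,
              AddCircle.volume_closedBall]
        _ ≤ ENNReal.ofReal (2 * η k) := ENNReal.ofReal_le_ofReal (min_le_right _ _)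
  rw [← inter_univ s, ← iUnion_Ioc_intCast, inter_iUnion]
  refine measure_iUnion_null fun j => ?_
  rw [← Measure.restrict_apply' measurableSet_Ioc]
  exact hunit j

lemma norm_coe_le_abs_sub_intCast (t : ℝ) (z : ℤ) : ‖(t : UnitAddCircle)‖ ≤ |t - z| := by
  rw [UnitAddCircle.norm_eq]
  exact round_le t z

lemma norm_coe_le_abs (t : ℝ) : ‖(t : UnitAddCircle)‖ ≤ |t| := by
  simpa using norm_coe_le_abs_sub_intCast t 0

lemma norm_coe_mul_le (s t : ℝ) :
    ‖((s * t : ℝ) : UnitAddCircle)‖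
      ≤ ‖(s : UnitAddCircle)‖ * |t| + 2 * |s| * ‖(t : UnitAddCircle)‖ := by
  have hround : |(round s : ℝ)| ≤ 2 * |s| := by
    have hs := round_le s 0
    have htri := abs_sub_abs_le_abs_sub (round s : ℝ) s
    rw [Int.cast_zero, sub_zero, abs_sub_comm] at hs
    linarith
  have hsplit : ((s * t : ℝ) : UnitAddCircle)
      = (((s - round s) * t : ℝ) : UnitAddCircle) + round s • (t : UnitAddCircle) := by
    rw [← AddCircle.coe_zsmul, ← AddCircle.coe_add, zsmul_eq_mul]
    ring_nf
  rw [hsplit]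
  refine (norm_add_le _ _).trans (add_le_add ?_ ?_)
  · rw [UnitAddCircle.norm_eq (x := s), ← abs_mul]
    exact norm_coe_le_abs _
  · refine (norm_zsmul_le _ _).trans ?_
    rw [Int.norm_eq_abs]
    gcongr

lemma norm_coe_sq_mul_inner_le {ι : Type*} [Fintype ι] {x y : EuclideanSpace ℝ ι} {q : ℕ}
    {H η : ℝ} (hx : ‖x‖ ≤ H) (hy : ‖y‖ ≤ H)
    (hxη : ∀ i, ‖((q * x i : ℝ) : UnitAddCircle)‖ ≤ η)
    (hyη : ∀ i, ‖((q * y i : ℝ) : UnitAddCircle)‖ ≤ η) :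
    ‖((q ^ 2 * ⟪x, y⟫ : ℝ) : UnitAddCircle)‖ ≤ Fintype.card ι * (3 * H * (q * η)) := by
  have hcoord : ∀ {z : EuclideanSpace ℝ ι}, ‖z‖ ≤ H → ∀ i, |q * z i| ≤ q * H := fun hz i => by
    rw [abs_mul, Nat.abs_cast]
    gcongr
    exact (PiLp.norm_apply_le _ i).trans hz
  have hterm : ∀ i, ‖((q * x i * (q * y i) : ℝ) : UnitAddCircle)‖ ≤ 3 * H * (q * η) :=
    fun i => by
      have hη := (norm_nonneg _).trans (hxη i)
      have hH := (norm_nonneg x).trans hx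
      calc _ ≤ _ := norm_coe_mul_le _ _
        _ ≤ η * (q * H) + 2 * (q * H) * η := by
            gcongr
            exacts [hxη i, hcoord hy i, hcoord hx i, hyη i]
        _ = 3 * H * (q * η) := by ring
  have hinner : q ^ 2 * ⟪x, y⟫ = ∑ i, q * x i * (q * y i) := by
    simp only [PiLp.inner_apply, RCLike.inner_apply, conj_trivial, Finset.mul_sum]
    exact Finset.sum_congr rfl fun i _ => by ring
  rw [hinner, QuotientAddGroup.mk_sum]
  exact (norm_sum_le_of_le _ fun i _ => hterm i).trans_eq (by simp)

lemma volume_dotSet_eq_zero {d : ℕ} {F : Set (EuclideanSpace ℝ (Fin d))}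
    (hF : Bornology.IsBounded F) {q : ℕ → ℕ} (hq : ∀ k, q k ≠ 0) {η : ℕ → ℝ}
    (hη : Tendsto (fun k => q k * η k) atTop (𝓝 0))
    (h : ∀ k, ∀ x ∈ F, ∀ i, ‖((q k * x i : ℝ) : UnitAddCircle)‖ ≤ η k) :
    volume (dotSet F) = 0 := by
  obtain ⟨H, hH⟩ := hF.exists_norm_le
  refine volume_eq_zero_of_norm_coe_mul_le (q := fun k => (q k : ℤ) ^ 2)
    (η := fun k => d * (3 * H * (q k * η k))) (fun k => by simpa using hq k) ?_ ?_
  · simpa using (hη.const_mul (3 * H)).const_mul (d : ℝ)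
  · rintro k _ ⟨x, hx, y, hy, rfl⟩
    simpa using norm_coe_sq_mul_inner_le (hH x hx) (hH y hy) (h k x hx) (h k y hy)

/-! ### The lifted Cantor set -/

section Lift

variable {m : ℕ} {a : Fin (m + 1) → ℝ} {u v : Fin m → ℝ}

/-- The point over `u` of the paraboloid translated by `a`. -/
noncomputable def liftPt (a : Fin (m + 1) → ℝ) (u : Fin m → ℝ) :
    EuclideanSpace ℝ (Fin (m + 1)) :=
  WithLp.toLp 2 (Fin.snoc (α := fun _ => ℝ) u (paraboloidHeight a u))

@[simp] lemma liftPt_castSucc (i : Fin m) : liftPt a u i.castSucc = u i := by simp [liftPt]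

@[simp] lemma liftPt_last : liftPt a u (Fin.last m) = paraboloidHeight a u := by simp [liftPt]

lemma liftPt_mem_translate (a : EuclideanSpace ℝ (Fin (m + 1))) (u : Fin m → ℝ) :
    liftPt a.ofLp u ∈ (a + ·) '' stdParaboloid (m + 1) := by
  refine ⟨liftPt a.ofLp u - a, ⟨WithLp.toLp 2 fun i => u i - a i.castSucc, ?_⟩, by simp⟩
  funext j
  cases j using Fin.lastCases with
  | last => simp [paraboloidHeight, EuclideanSpace.real_norm_sq_eq]
  | cast i => simp

lemma continuous_liftPt (a : Fin (m + 1) → ℝ) : Continuous (liftPt a) := by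
  unfold liftPt paraboloidHeight
  fun_prop

lemma dimH_le_dimH_image_liftPt (a : Fin (m + 1) → ℝ) (K : Set (Fin m → ℝ)) :
    dimH K ≤ dimH (liftPt a '' K) := by
  have hproj : LipschitzWith 1
      fun (x : EuclideanSpace ℝ (Fin (m + 1))) (i : Fin m) => x i.castSucc :=
    .of_dist_le_mul fun x y => by
      rw [NNReal.coe_one, one_mul, dist_pi_le_iff dist_nonneg]
      intro i
      rw [dist_eq_norm x y, Real.dist_eq]
      exact PiLp.norm_apply_le (x - y) i.castSucc
  simpa only [image_image, liftPt_castSucc, image_id'] using hproj.dimH_image_le (liftPt a '' K)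

lemma abs_paraboloidHeight_sub_le (ha : ∀ i : Fin m, a i.castSucc ∈ Icc 0 1)
    (hu : u ∈ Icc 0 1) (hv : v ∈ Icc 0 1) {δ : ℝ} (hδ : ∀ i, |u i - v i| ≤ δ) :
    |paraboloidHeight a u - paraboloidHeight a v| ≤ 2 * m * δ := by
  have hfactor : paraboloidHeight a u - paraboloidHeight a v
      = ∑ i, (u i - v i) * (u i + v i - 2 * a i.castSucc) := by
    rw [paraboloidHeight, paraboloidHeight, add_sub_add_left_eq_sub, ← Finset.sum_sub_distrib]
    exact Finset.sum_congr rfl fun i _ => by ring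
  have hterm : ∀ i, |(u i - v i) * (u i + v i - 2 * a i.castSucc)| ≤ δ * 2 := fun i => by
    have hδ0 := (abs_nonneg _).trans (hδ i)
    have hbound : |u i + v i - 2 * a i.castSucc| ≤ 2 := by
      have hu0 : 0 ≤ u i := hu.1 i
      have hu1 : u i ≤ 1 := hu.2 i
      have hv0 : 0 ≤ v i := hv.1 i
      have hv1 : v i ≤ 1 := hv.2 i
      rw [abs_le]
      constructor <;> linarith [(ha i).1, (ha i).2]
    rw [abs_mul]
    gcongr
    exact hδ i
  rw [hfactor]
  refine (Finset.abs_sum_le_sum_abs _ _).trans ((Finset.sum_le_sum fun i _ => hterm i).trans_eq ?_)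
  simp
  ring

lemma norm_coe_mul_paraboloidHeight_le {q : ℕ} (hq : q ≠ 0) {n : Fin m → ℕ} (hn : ∀ i, n i ≤ q)
    (ha : ∀ i : Fin m, a i.castSucc ∈ Icc 0 1) (hu : u ∈ Icc 0 1) {δ : ℝ}
    (hδ : ∀ i, |q * u i - n i| ≤ δ) :
    ‖((q * paraboloidHeight a u : ℝ) : UnitAddCircle)‖ ≤ 2 * m * δ + ‖phase q n a‖ := by
  have hq0 : (0 : ℝ) < q := by positivity
  set v : Fin m → ℝ := fun i => n i / q with hv
  have hv01 : v ∈ Icc 0 1 :=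
    ⟨fun i => by positivity, fun i => div_le_one_of_le₀ (Nat.cast_le.mpr (hn i)) hq0.le⟩
  have huv : ∀ i, |u i - v i| ≤ δ / q := fun i => by
    rw [le_div_iff₀' hq0, ← abs_of_pos hq0, ← abs_mul, mul_sub,
      mul_div_cancel₀ _ hq0.ne']
    exact hδ i
  have hsplit : ((q * paraboloidHeight a u : ℝ) : UnitAddCircle)
      = ((q * (paraboloidHeight a u - paraboloidHeight a v) : ℝ) : UnitAddCircle)
        + phase q n a := by
    rw [phase, ← AddCircle.coe_add, ← hv, mul_sub, sub_add_cancel]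
  rw [hsplit]
  refine (norm_add_le _ _).trans (add_le_add_left ((norm_coe_le_abs _).trans ?_) _)
  calc |q * (paraboloidHeight a u - paraboloidHeight a v)|
      = q * |paraboloidHeight a u - paraboloidHeight a v| := by rw [abs_mul, Nat.abs_cast]
    _ ≤ q * (2 * m * (δ / q)) := by gcongr; exact abs_paraboloidHeight_sub_le ha hu hv01 huv
    _ = 2 * m * δ := by field_simp

variable {θ : ℝ} {P : Scales m θ}

lemma Scales.abs_two_pow_mul_sub_le {k : ℕ} {n : Fin m → ℕ} (hu : u ∈ P.latticeCube k n)
    (i : Fin m) : |2 ^ P.A k * u i - n i| ≤ 1 / 2 ^ (P.B (k + 1) - P.A k) := by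
  obtain ⟨D, hD⟩ := Nat.exists_eq_add_of_le (P.A_lt_B_succ k).le
  have h := mem_dyadicCube.mp hu i
  rw [hD, Nat.add_sub_cancel_left, pow_add, mul_comm ((2 : ℝ) ^ P.A k), mul_assoc] at h
  push_cast at h
  have h2 : (0 : ℝ) < 2 ^ D := by positivity
  rw [hD, Nat.add_sub_cancel_left, abs_le]
  constructor <;> rw [← mul_le_mul_iff_right₀ h2, mul_sub] <;> field_simp <;> linarith

lemma norm_coe_mul_liftPt_le (ha : a ∈ univ.pi fun _ => Ioc 0 1)
    (hu : u ∈ trapSet P (goodPts P a)) (k : ℕ) (j : Fin (m + 1)) :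
    ‖(((2 ^ P.A k : ℕ) * liftPt a u j : ℝ) : UnitAddCircle)‖
      ≤ (2 * m + 1) * (1 / 2 ^ (P.B (k + 1) - P.A k)) := by
  obtain ⟨n, hgood, hn, hcube⟩ := hu k
  set δ : ℝ := 1 / 2 ^ (P.B (k + 1) - P.A k)
  have hδ0 : 0 < δ := by positivity
  have hnear : ∀ i, |(2 ^ P.A k : ℕ) * u i - n i| ≤ δ := fun i => by
    rw [Nat.cast_pow, Nat.cast_ofNat]
    exact P.abs_two_pow_mul_sub_le hcube i
  cases j using Fin.lastCases with
  | last =>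
    have hphase : ‖phase (2 ^ P.A k) n a‖ ≤ δ / 2 := mem_closedBall_zero_iff.mp hgood
    have hheight := norm_coe_mul_paraboloidHeight_le (by positivity) (fun i => (hn i).le)
      (fun i => Ioc_subset_Icc_self (ha i.castSucc trivial)) (trapSet_subset_Icc hu) hnear
    rw [liftPt_last]
    linarith
  | cast i =>
    rw [liftPt_castSucc]
    refine (norm_coe_le_abs_sub_intCast _ (n i)).trans ((hnear i).trans ?_)
    exact le_mul_of_one_le_left hδ0.le (by simp)

lemma Scales.two_pow_mul_le (k : ℕ) :
    (2 : ℝ) ^ P.A k * (1 / 2 ^ (P.B (k + 1) - P.A k)) ≤ (1 / 2) ^ k := by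
  have := P.gap k
  rw [mul_one_div, one_div_pow, div_le_div_iff₀ (by positivity) (by positivity), one_mul,
    ← pow_add]
  exact pow_le_pow_right₀ one_le_two (by omega)

lemma volume_dotSet_image_liftPt (P : Scales m θ) (ha : a ∈ univ.pi fun _ => Ioc 0 1) :
    volume (dotSet (liftPt a '' trapSet P (goodPts P a))) = 0 := by
  refine volume_dotSet_eq_zero (isCompact_trapSet.image (continuous_liftPt a)).isBounded
    (q := fun k => 2 ^ P.A k) (fun k => by positivity) ?_
    fun k => forall_mem_image.mpr fun u hu => norm_coe_mul_liftPt_le ha hu k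
  have hgeom := (tendsto_pow_atTop_nhds_zero_of_lt_one (r := (1 / 2 : ℝ)) (by norm_num)
    (by norm_num)).const_mul (2 * m + 1 : ℝ)
  rw [mul_zero] at hgeom
  refine squeeze_zero (fun k => by positivity) (fun k => ?_) hgeom
  rw [mul_left_comm]
  push_cast
  gcongr
  exact P.two_pow_mul_le k

end Lift

theorem translated_paraboloid_counterexamples_general {d : ℕ} (hd : 3 ≤ d) {ε : ℝ} (hε : 0 < ε) :
    ∃ J : Set (EuclideanSpace ℝ (Fin d)), 0 < volume J ∧
      ∀ a ∈ J, ∃ F : Set (EuclideanSpace ℝ (Fin d)),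
        F ⊆ (a + ·) '' stdParaboloid d ∧ IsCompact F ∧
        ENNReal.ofReal (((d : ℝ) - 2) / 2 - ε) ≤ dimH F ∧ volume (dotSet F) = 0 := by
  obtain ⟨m, rfl⟩ : ∃ m, d = m + 1 := ⟨d - 1, by omega⟩
  obtain ⟨θ, hθ, ⟨P⟩⟩ := exists_scales (by omega : 2 ≤ m) hε
  refine ⟨WithLp.ofLp ⁻¹' ({a | Rich P (goodPts P a)} ∩ univ.pi fun _ => Ioc 0 1), ?_, ?_⟩
  · exact (volume_rich_goodPts_pos P).trans_eq
      ((EuclideanSpace.volume_preserving_symm_measurableEquiv_toLp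
        (Fin (m + 1))).measure_preimage_equiv _).symm
  · rintro a ⟨hrich, ha⟩
    refine ⟨liftPt a.ofLp '' trapSet P (goodPts P a.ofLp),
      image_subset_iff.mpr fun u _ => liftPt_mem_translate a u,
      isCompact_trapSet.image (continuous_liftPt _), ?_, volume_dotSet_image_liftPt P ha⟩
    calc ENNReal.ofReal (((m + 1 : ℕ) - 2 : ℝ) / 2 - ε) ≤ ENNReal.ofReal (m * θ) :=
          ENNReal.ofReal_le_ofReal (hθ.trans_eq' (by push_cast; ring))
      _ ≤ dimH (trapSet P (goodPts P a.ofLp)) := Rich.le_dimH_trapSet hrich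
      _ ≤ _ := dimH_le_dimH_image_liftPt _ _

/-- For `d ≥ 4` and every sufficiently small `ε > 0` there is a set `J ⊆ ℝ^d` of
positive Lebesgue measure such that each translated paraboloid `a + P_d` with `a ∈ J`
contains a compact subset of Hausdorff dimension at least `(d-2)/2 - ε` whose dot
product set has Lebesgue measure zero. -/
theorem translated_paraboloid_counterexamples
    (d : ℕ) (hd : 4 ≤ d) :
    ∃ ε₀ : ℝ, 0 < ε₀ ∧ ∀ ε : ℝ, 0 < ε → ε < ε₀ →
      ∃ J : Set (EuclideanSpace ℝ (Fin d)), 0 < volume J ∧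
        ∀ a ∈ J, ∃ F : Set (EuclideanSpace ℝ (Fin d)),
          F ⊆ (a + ·) '' stdParaboloid d ∧ IsCompact F ∧
          ENNReal.ofReal (((d : ℝ) - 2) / 2 - ε) ≤ dimH F ∧ volume (dotSet F) = 0 :=
  ⟨1, one_pos, fun _ hε _ => translated_paraboloid_counterexamples_general (by omega) hε⟩
end
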